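/- arXiv:1307.0363 — 2 statements merged into one kernel-verified Lean document; each statement's English description precedes it below -/
import Mathlib

section
/- Let ρ_RQE be a state on H_R⊗H_Q⊗H_E (all finite-dimensional) with I(R;E|Q)_ρ = 0, and let 𝒮 = 𝒮_QE(ρ_RQE) be its steered family. Then for all finite-dimensional H_{Q'}, H_{E'} and every isometry V : H_Q⊗H_E → H_{Q'}⊗H_{E'}, there exists a CPTP map 𝓔 : L(H_Q) → L(H_{Q'}) such that Tr_{E'}[V ω_QE V†] = 𝓔(Tr_E[ω_QE]) for every ω_QE ∈ 𝒮. -/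
open Matrix Kronecker ComplexOrder

noncomputable section

/-- Von Neumann entropy `S(ρ) = -Tr[ρ log ρ]`, computed from the eigenvalues
(junk value `0` if `ρ` is not Hermitian). -/
def vnEntropy {n : Type*} [Fintype n] [DecidableEq n] (ρ : Matrix n n ℂ) : ℝ :=
  if h : ρ.IsHermitian then ∑ i, Real.negMulLog (h.eigenvalues i) else 0

/-- Partial trace over the first tensor factor. -/
def ptraceLeft {A B : Type*} [Fintype A] (M : Matrix (A × B) (A × B) ℂ) : Matrix B B ℂ :=
  Matrix.of fun x y => ∑ a, M (a, x) (a, y)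

/-- Partial trace over the second tensor factor. -/
def ptraceRight {A B : Type*} [Fintype B] (M : Matrix (A × B) (A × B) ℂ) : Matrix A A ℂ :=
  Matrix.of fun x y => ∑ b, M (x, b) (y, b)

/-- Partial trace over the last factor of a tripartite operator on `R ⊗ Q ⊗ E`. -/
def ptrace3E {R Q E : Type*} [Fintype E] (M : Matrix (R × Q × E) (R × Q × E) ℂ) :
    Matrix (R × Q) (R × Q) ℂ :=
  Matrix.of fun x y => ∑ e, M (x.1, x.2, e) (y.1, y.2, e)

/-- A state is a positive semidefinite operator with unit trace. -/
def IsState {n : Type*} [Fintype n] (ρ : Matrix n n ℂ) : Prop :=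
  ρ.PosSemidef ∧ ρ.trace = 1

/-- Quantum mutual information `I(A;B) = S(ρ_A) + S(ρ_B) - S(ρ_AB)`. -/
def mutualInfo {A B : Type*} [Fintype A] [DecidableEq A] [Fintype B] [DecidableEq B]
    (ρ : Matrix (A × B) (A × B) ℂ) : ℝ :=
  vnEntropy (ptraceRight ρ) + vnEntropy (ptraceLeft ρ) - vnEntropy ρ

/-- Conditional quantum mutual information
`I(R;E|Q) = S(ρ_RQ) + S(ρ_QE) - S(ρ_RQE) - S(ρ_Q)`. -/
def condMutualInfo {R Q E : Type*} [Fintype R] [DecidableEq R] [Fintype Q] [DecidableEq Q]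
    [Fintype E] [DecidableEq E] (ρ : Matrix (R × Q × E) (R × Q × E) ℂ) : ℝ :=
  vnEntropy (ptrace3E ρ) + vnEntropy (ptraceLeft ρ) - vnEntropy ρ
    - vnEntropy (ptraceLeft (ptrace3E ρ))

/-- The map `id_n ⊗ Φ` obtained by applying `Φ` blockwise. -/
def idTensor {A B : Type*} (n : Type*) (Φ : Matrix A A ℂ →ₗ[ℂ] Matrix B B ℂ)
    (M : Matrix (n × A) (n × A) ℂ) : Matrix (n × B) (n × B) ℂ :=
  Matrix.of fun x y => Φ (Matrix.of fun a b => M (x.1, a) (y.1, b)) x.2 y.2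

/-- Complete positivity: for every `k`, `id_{Fin k} ⊗ Φ` preserves positive semidefiniteness. -/
def IsCPMap {A B : Type*} [Fintype A] [Fintype B]
    (Φ : Matrix A A ℂ →ₗ[ℂ] Matrix B B ℂ) : Prop :=
  ∀ (k : ℕ) (M : Matrix (Fin k × A) (Fin k × A) ℂ), M.PosSemidef →
    (idTensor (Fin k) Φ M).PosSemidef

/-- A CPTP map (quantum channel). -/
def IsCPTP {A B : Type*} [Fintype A] [Fintype B]
    (Φ : Matrix A A ℂ →ₗ[ℂ] Matrix B B ℂ) : Prop :=
  IsCPMap Φ ∧ ∀ M : Matrix A A ℂ, (Φ M).trace = M.trace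

/-- The family of states on `Q ⊗ E` steered from `R` by measurements on a tripartite state. -/
def steered {R Q E : Type*} [Fintype R] [Fintype Q] [DecidableEq Q] [Fintype E] [DecidableEq E]
    (ρ : Matrix (R × Q × E) (R × Q × E) ℂ) : Set (Matrix (Q × E) (Q × E) ℂ) :=
  { ω | ∃ P : Matrix R R ℂ, P.PosSemidef ∧
      (ptraceLeft ((P ⊗ₖ (1 : Matrix (Q × E) (Q × E) ℂ)) * ρ)).trace ≠ 0 ∧
      ω = ((ptraceLeft ((P ⊗ₖ (1 : Matrix (Q × E) (Q × E) ℂ)) * ρ)).trace)⁻¹ •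
            ptraceLeft ((P ⊗ₖ (1 : Matrix (Q × E) (Q × E) ℂ)) * ρ) }

/-- A post-selected family of bipartite system-environment states: the normalized
output state space of some completely positive map `𝒫 : Q₀E₀ → QE`. -/
def IsPostSelected {Q E : Type*} [Fintype Q] [Fintype E]
    (S : Set (Matrix (Q × E) (Q × E) ℂ)) : Prop :=
  ∃ (n0 m0 : ℕ)
    (P : Matrix (Fin n0 × Fin m0) (Fin n0 × Fin m0) ℂ →ₗ[ℂ] Matrix (Q × E) (Q × E) ℂ),
    IsCPMap P ∧
    S = { ω | ∃ ρ0, IsState ρ0 ∧ (P ρ0).trace ≠ 0 ∧ ω = ((P ρ0).trace)⁻¹ • P ρ0 }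

/-!
Since `I(R;E|Q)_ρ = D(ρ_RQE ‖ 1 ⊗ ρ_QE) - D(ρ_RQ ‖ 1 ⊗ ρ_Q)`, its vanishing is an equality in the
monotonicity of relative entropy under restriction from `L(RQE)` to `L(RQ) ⊗ 1`. Relative entropy
is the increment from `t = 0` to `t = ∞`, up to a logarithmic divergence, of a log potential whose
derivative at `t` is the expectation of a resolvent of the relative modular operator. By a
variational characterization of the resolvents, the difference of the two log potentials is
nondecreasing in `t`; here it agrees at `t = 0` and `t = ∞`, so all the resolvents agree. On
finite spectra every function is a combination of resolvents, so the square roots agree as well,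
and they give
`ρ = G (ρ_RQ ⊗ 1_E) Gᴴ` with `G = 1_R ⊗ ρ_QE^{1/2} (ρ_Q^{-1/2} ⊗ 1_E)`: the Petz map, completed
to a channel, recovers `ρ` from `ρ_RQ` while acting on `Q` only.

Steering by an effect on `R` commutes with channels on `Q`, so the same channel recovers every
steered state `ω` from its marginal `ω_Q`. Compose it with conjugation by `V` and a partial trace.
-/

open Filter Topology

lemma exists_sum_mul_inv_sub_eq {K : Type*} [Field K] {s : Finset K} {v : K → K}
    (hv : Set.InjOn v s) (hne : ∀ x ∈ s, ∀ t ∈ s, x ≠ v t) (g : K → K) :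
    ∃ a : K → K, ∀ x ∈ s, ∑ t ∈ s, a t * (x - v t)⁻¹ = g x := by
  classical
  let D := Lagrange.nodal s v
  let N := Lagrange.interpolate s id fun x => g x * D.eval x
  refine ⟨fun t => Lagrange.nodalWeight s v t * N.eval (v t), fun x hx => ?_⟩
  have hDx : D.eval x ≠ 0 := by
    rw [Lagrange.eval_nodal]
    exact Finset.prod_ne_zero_iff.2 fun t ht => sub_ne_zero.2 (hne x hx t ht)
  have hNx : N.eval x = g x * D.eval x :=
    Lagrange.eval_interpolate_at_node _ (Set.injOn_id (s : Set K)) hx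
  -- `N` has degree `< #s`, so it is also recovered from its values at the nodes `v t`.
  have hN : N = Lagrange.interpolate s v fun t => N.eval (v t) :=
    Lagrange.eq_interpolate hv (Lagrange.degree_interpolate_lt _ (Set.injOn_id _))
  have hbary := Lagrange.eval_interpolate_not_at_node (fun t => N.eval (v t)) (hne x hx)
  rw [← hN, hNx, mul_comm] at hbary
  rw [mul_left_cancel₀ hDx hbary]
  exact Finset.sum_congr rfl fun t _ => by ring

lemma deriv_eq_zero_of_nonneg_of_tendsto {F F' : ℝ → ℝ} {a : ℝ}
    (hF : ∀ t, a ≤ t → HasDerivAt F (F' t) t) (hF' : ∀ t, a < t → 0 ≤ F' t)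
    (hlim : Tendsto F atTop (𝓝 (F a))) {t : ℝ} (ht : a < t) : F' t = 0 := by
  have hmono : MonotoneOn F (Set.Ici a) := by
    refine monotoneOn_of_deriv_nonneg (convex_Ici a)
      (fun t ht => (hF t ht).continuousAt.continuousWithinAt) ?_ ?_ <;> rw [interior_Ici]
    · exact fun t ht => (hF t (le_of_lt ht)).differentiableAt.differentiableWithinAt
    · exact fun t ht => (hF t (le_of_lt ht)).deriv ▸ hF' t ht
  have hconst : ∀ t, a ≤ t → F t = F a := fun t hat =>
    le_antisymm
      (ge_of_tendsto hlim <| (eventually_ge_atTop t).mono fun s hts =>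
        hmono hat (hat.trans hts) hts)
      (hmono Set.self_mem_Ici hat hat)
  have hloc : F =ᶠ[𝓝 t] fun _ => F a := (eventually_ge_nhds ht).mono hconst
  exact (hF t ht.le).unique ((hasDerivAt_const t (F a)).congr_of_eventuallyEq hloc)

section SpectralCalculus

variable {n : Type*} [Fintype n] [DecidableEq n]

lemma continuousOn_realSpectrum (f : ℝ → ℝ) (M : Matrix n n ℂ) :
    ContinuousOn f (spectrum ℝ M) :=
  finite_real_spectrum.continuousOn f

/-- The real spectrum of a matrix, as a finite set. -/
def realSpectrum (M : Matrix n n ℂ) : Finset ℝ := (finite_real_spectrum (A := M)).toFinset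

/-- The spectral projection of a Hermitian matrix at `x`; it is zero unless `x` is an eigenvalue. -/
def eigenProj (M : Matrix n n ℂ) (x : ℝ) : Matrix n n ℂ := cfc (Pi.single x 1) M

lemma mem_realSpectrum {M : Matrix n n ℂ} {x : ℝ} : x ∈ realSpectrum M ↔ x ∈ spectrum ℝ M :=
  Set.Finite.mem_toFinset _

lemma nonneg_of_mem_spectrum {M : Matrix n n ℂ} (hM : M.PosSemidef) {x : ℝ}
    (hx : x ∈ spectrum ℝ M) : 0 ≤ x := by
  rw [hM.isHermitian.spectrum_real_eq_range_eigenvalues] at hx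
  obtain ⟨i, rfl⟩ := hx
  exact hM.eigenvalues_nonneg i

lemma nonneg_of_mem_realSpectrum {M : Matrix n n ℂ} (hM : M.PosSemidef) {x : ℝ}
    (hx : x ∈ realSpectrum M) : 0 ≤ x :=
  nonneg_of_mem_spectrum hM (mem_realSpectrum.1 hx)

lemma isHermitian_cfc (f : ℝ → ℝ) (M : Matrix n n ℂ) : (cfc f M).IsHermitian :=
  cfc_predicate f M

lemma cfc_mul_cfc (f g : ℝ → ℝ) (M : Matrix n n ℂ) :
    cfc f M * cfc g M = cfc (fun x => f x * g x) M :=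
  (cfc_mul f g M (continuousOn_realSpectrum f M) (continuousOn_realSpectrum g M)).symm

lemma cfc_mul_eigenProj (f : ℝ → ℝ) (M : Matrix n n ℂ) (x : ℝ) :
    cfc f M * eigenProj M x = f x • eigenProj M x := by
  rw [eigenProj, cfc_mul_cfc, ← cfc_const_mul _ _ _ (continuousOn_realSpectrum _ M)]
  congr 1 with y
  obtain rfl | hy := eq_or_ne y x
  · rfl
  · simp [hy]

lemma eigenProj_mul_cfc (f : ℝ → ℝ) (M : Matrix n n ℂ) (x : ℝ) :
    eigenProj M x * cfc f M = f x • eigenProj M x := by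
  rw [eigenProj, (cfc_commute_cfc _ f M).eq]
  exact cfc_mul_eigenProj f M x

lemma isHermitian_eigenProj (M : Matrix n n ℂ) (x : ℝ) : (eigenProj M x).IsHermitian :=
  isHermitian_cfc _ M

lemma eigenProj_mul_self (M : Matrix n n ℂ) (x : ℝ) :
    eigenProj M x * eigenProj M x = eigenProj M x := by
  simpa [eigenProj] using cfc_mul_eigenProj (Pi.single x 1) M x

lemma posSemidef_eigenProj (M : Matrix n n ℂ) (x : ℝ) : (eigenProj M x).PosSemidef := by
  have h := posSemidef_conjTranspose_mul_self (eigenProj M x)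
  rwa [(isHermitian_eigenProj M x).eq, eigenProj_mul_self] at h

lemma sum_eigenProj {M : Matrix n n ℂ} (hM : M.IsHermitian) :
    ∑ x ∈ realSpectrum M, eigenProj M x = 1 := by
  simp only [eigenProj]
  rw [← cfc_sum _ _ _ fun _ _ => continuousOn_realSpectrum _ M,
    ← cfc_const_one ℝ M hM.isSelfAdjoint]
  refine cfc_congr fun y hy => ?_
  rw [Finset.sum_apply, Finset.sum_eq_single_of_mem y (mem_realSpectrum.2 hy)]
  · exact Pi.single_eq_same y 1
  · exact fun x _ hx => Pi.single_eq_of_ne' hx 1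

lemma cfc_eq_self {M : Matrix n n ℂ} (hM : M.IsHermitian) : cfc (fun x : ℝ => x) M = M :=
  cfc_id' ℝ M hM.isSelfAdjoint

lemma mul_cfc_eq_zero {Z M : Matrix n n ℂ} (hM : M.IsHermitian) (hZ : Z * M = 0) {f : ℝ → ℝ}
    (hf : f 0 = 0) : Z * cfc f M = 0 := by
  have hfac : cfc f M = M * cfc (fun x => x⁻¹ * f x) M := by
    nth_rewrite 2 [← cfc_eq_self hM]
    rw [cfc_mul_cfc]
    congr 1 with x
    obtain rfl | hx := eq_or_ne x 0
    · simp [hf]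
    · field_simp
  rw [hfac, ← Matrix.mul_assoc, hZ, Matrix.zero_mul]

lemma cfc_sqrt_mul_self {M : Matrix n n ℂ} (hM : M.PosSemidef) :
    cfc Real.sqrt M * cfc Real.sqrt M = M := by
  rw [cfc_mul_cfc]
  nth_rewrite 2 [← cfc_eq_self hM.isHermitian]
  exact cfc_congr fun x hx => Real.mul_self_sqrt (nonneg_of_mem_spectrum hM hx)

end SpectralCalculus

section TwoSidedCalculus

variable {n : Type*} [Fintype n] [DecidableEq n]

/-- The functional calculus of the commuting operators of left multiplication by `σ` and right
multiplication by `ρ`, applied to the identity matrix. It sends `f(x) g(y)` to `f(σ) g(ρ)`. -/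
def cfc₂ (σ ρ : Matrix n n ℂ) : (ℝ → ℝ → ℝ) →ₗ[ℝ] Matrix n n ℂ where
  toFun h := ∑ x ∈ realSpectrum σ, ∑ y ∈ realSpectrum ρ, h x y • (eigenProj σ x * eigenProj ρ y)
  map_add' h k := by simp only [Pi.add_apply, add_smul, Finset.sum_add_distrib]
  map_smul' c h := by
    simp only [Pi.smul_apply, smul_eq_mul, mul_smul, Finset.smul_sum, RingHom.id_apply]

lemma cfc₂_apply (σ ρ : Matrix n n ℂ) (h : ℝ → ℝ → ℝ) :
    cfc₂ σ ρ h =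
      ∑ x ∈ realSpectrum σ, ∑ y ∈ realSpectrum ρ, h x y • (eigenProj σ x * eigenProj ρ y) :=
  rfl

lemma cfc₂_congr {σ ρ : Matrix n n ℂ} {h k : ℝ → ℝ → ℝ}
    (hk : ∀ x ∈ realSpectrum σ, ∀ y ∈ realSpectrum ρ, h x y = k x y) :
    cfc₂ σ ρ h = cfc₂ σ ρ k :=
  Finset.sum_congr rfl fun x hx => Finset.sum_congr rfl fun y hy => by rw [hk x hx y hy]

lemma cfc_mul_cfc₂ (σ ρ : Matrix n n ℂ) (f : ℝ → ℝ) (h : ℝ → ℝ → ℝ) :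
    cfc f σ * cfc₂ σ ρ h = cfc₂ σ ρ fun x y => f x * h x y := by
  simp only [cfc₂_apply, Finset.mul_sum]
  refine Finset.sum_congr rfl fun x _ => Finset.sum_congr rfl fun y _ => ?_
  rw [mul_smul_comm, ← Matrix.mul_assoc, cfc_mul_eigenProj, smul_mul_assoc, smul_smul, mul_comm]

lemma cfc₂_mul_cfc (σ ρ : Matrix n n ℂ) (f : ℝ → ℝ) (h : ℝ → ℝ → ℝ) :
    cfc₂ σ ρ h * cfc f ρ = cfc₂ σ ρ fun x y => h x y * f y := by
  simp only [cfc₂_apply, Finset.sum_mul]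
  refine Finset.sum_congr rfl fun x _ => Finset.sum_congr rfl fun y _ => ?_
  rw [smul_mul_assoc, Matrix.mul_assoc, eigenProj_mul_cfc, mul_smul_comm, smul_smul]

lemma cfc₂_one {σ ρ : Matrix n n ℂ} (hσ : σ.IsHermitian) (hρ : ρ.IsHermitian) :
    cfc₂ σ ρ 1 = 1 := by
  simp only [cfc₂_apply, Pi.one_apply, one_smul]
  rw [← Finset.sum_mul_sum, sum_eigenProj hσ, sum_eigenProj hρ, Matrix.one_mul]

lemma cfc₂_mul {σ ρ : Matrix n n ℂ} (hσ : σ.IsHermitian) (hρ : ρ.IsHermitian) (f g : ℝ → ℝ) :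
    cfc₂ σ ρ (fun x y => f x * g y) = cfc f σ * cfc g ρ := by
  rw [← Matrix.mul_one (cfc f σ), ← cfc₂_one hσ hρ, cfc_mul_cfc₂, cfc₂_mul_cfc]
  simp

lemma cfc₂_left {σ ρ : Matrix n n ℂ} (hσ : σ.IsHermitian) (hρ : ρ.IsHermitian) (f : ℝ → ℝ) :
    cfc₂ σ ρ (fun x _ => f x) = cfc f σ := by
  simpa only [mul_one, cfc_const_one ℝ ρ hρ.isSelfAdjoint] using cfc₂_mul hσ hρ f fun _ => 1

lemma cfc₂_right {σ ρ : Matrix n n ℂ} (hσ : σ.IsHermitian) (hρ : ρ.IsHermitian) (g : ℝ → ℝ) :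
    cfc₂ σ ρ (fun _ y => g y) = cfc g ρ := by
  simpa only [one_mul, cfc_const_one ℝ σ hσ.isSelfAdjoint] using cfc₂_mul hσ hρ (fun _ => 1) g

end TwoSidedCalculus

section PositiveTrace

variable {n : Type*} [Fintype n]

lemma eq_of_mul_self_eq_of_trace_eq {S T : Matrix n n ℂ} (hS : S.IsHermitian)
    (hTS : T * S = S * S) (htr : (T * Tᴴ).trace = (S * S).trace) : T = S := by
  have hST : S * Tᴴ = S * S := by
    simpa only [conjTranspose_mul, hS.eq] using congrArg conjTranspose hTS
  refine sub_eq_zero.1 (trace_mul_conjTranspose_self_eq_zero_iff.1 ?_)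
  rw [conjTranspose_sub, hS.eq, Matrix.sub_mul, Matrix.mul_sub, Matrix.mul_sub, hTS, hST, sub_self,
    sub_zero, trace_sub, htr, sub_self]

lemma mul_eq_zero_of_trace_mul_mul_conjTranspose_eq_zero {Z M : Matrix n n ℂ}
    (hM : M.PosSemidef) (h : (Z * M * Zᴴ).trace = 0) : Z * M = 0 := by
  classical
  have hfac : Z * M * Zᴴ = Z * cfc Real.sqrt M * (Z * cfc Real.sqrt M)ᴴ := by
    rw [conjTranspose_mul, (isHermitian_cfc Real.sqrt M).eq, Matrix.mul_assoc Z (cfc _ M),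
      ← Matrix.mul_assoc (cfc _ M), cfc_sqrt_mul_self hM, Matrix.mul_assoc]
  rw [hfac, trace_mul_conjTranspose_self_eq_zero_iff] at h
  rw [← cfc_sqrt_mul_self hM, ← Matrix.mul_assoc, h, Matrix.zero_mul]

variable [DecidableEq n]

lemma eigenProj_mul_eq_zero_iff {M : Matrix n n ℂ} (hM : M.PosSemidef) (N : Matrix n n ℂ) (x : ℝ) :
    eigenProj N x * M = 0 ↔ (eigenProj N x * M).trace = 0 := by
  refine ⟨fun h => by rw [h, trace_zero],
    fun h => mul_eq_zero_of_trace_mul_mul_conjTranspose_eq_zero hM ?_⟩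
  rwa [(isHermitian_eigenProj N x).eq, Matrix.trace_mul_comm, ← Matrix.mul_assoc,
    eigenProj_mul_self]

lemma cfc_eq_one_sub_eigenProj {M : Matrix n n ℂ} (hM : M.IsHermitian) {f : ℝ → ℝ}
    (hf0 : f 0 = 0) (hf1 : ∀ x ∈ spectrum ℝ M, x ≠ 0 → f x = 1) :
    cfc f M = 1 - eigenProj M 0 := by
  have hcont (f : ℝ → ℝ) := continuousOn_realSpectrum f M
  rw [eigenProj, ← cfc_const_one ℝ M hM.isSelfAdjoint, ← cfc_sub _ _ M (hcont _) (hcont _)]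
  refine cfc_congr fun x hx => ?_
  obtain rfl | hx0 := eq_or_ne x 0
  · simp [hf0]
  · simp [hf1 x hx hx0, hx0]

lemma cfc_sqrt_mul_cfc_inv_sqrt {M : Matrix n n ℂ} (hM : M.PosSemidef) :
    cfc Real.sqrt M * cfc (fun x => (√x)⁻¹) M = 1 - eigenProj M 0 := by
  rw [cfc_mul_cfc]
  refine cfc_eq_one_sub_eigenProj hM.isHermitian (by simp) fun x hx hx0 => ?_
  exact mul_inv_cancel₀ (Real.sqrt_ne_zero'.2 ((nonneg_of_mem_spectrum hM hx).lt_of_ne' hx0))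

lemma cfc_inv_sqrt_mul_mul_cfc_inv_sqrt {M : Matrix n n ℂ} (hM : M.PosSemidef) :
    cfc (fun x => (√x)⁻¹) M * M * cfc (fun x => (√x)⁻¹) M = 1 - eigenProj M 0 := by
  nth_rewrite 2 [← cfc_eq_self hM.isHermitian]
  rw [cfc_mul_cfc, cfc_mul_cfc]
  refine cfc_eq_one_sub_eigenProj hM.isHermitian (by simp) fun x hx hx0 => ?_
  have hx_pos := (nonneg_of_mem_spectrum hM hx).lt_of_ne' hx0
  rw [mul_right_comm, ← mul_inv, Real.mul_self_sqrt hx_pos.le, inv_mul_cancel₀ hx0]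

end PositiveTrace

section Resolvent

variable {n : Type*} [Fintype n]

/-- The Sylvester operator `X ↦ σ X + t X ρ`. -/
def sylvester (σ ρ : Matrix n n ℂ) (t : ℝ) (X : Matrix n n ℂ) : Matrix n n ℂ :=
  σ * X + t • (X * ρ)

lemma sylvester_sub (σ ρ : Matrix n n ℂ) (t : ℝ) (X Y : Matrix n n ℂ) :
    sylvester σ ρ t (X - Y) = sylvester σ ρ t X - sylvester σ ρ t Y := by
  simp only [sylvester, Matrix.mul_sub, Matrix.sub_mul, smul_sub]
  abel

lemma trace_conjTranspose_mul_sylvester {σ ρ : Matrix n n ℂ} (hσ : σ.IsHermitian)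
    (hρ : ρ.IsHermitian) (t : ℝ) (X Y : Matrix n n ℂ) :
    (Xᴴ * sylvester σ ρ t Y).trace = ((sylvester σ ρ t X)ᴴ * Y).trace := by
  have hcycle : (Xᴴ * (Y * ρ)).trace = (ρ * Xᴴ * Y).trace := by
    rw [← Matrix.mul_assoc, Matrix.trace_mul_comm, Matrix.mul_assoc]
  simp only [sylvester, conjTranspose_add, conjTranspose_smul, conjTranspose_mul, hσ.eq, hρ.eq,
    star_trivial, Matrix.mul_add, Matrix.add_mul, Matrix.mul_smul, Matrix.smul_mul, trace_add,
    trace_smul, hcycle, Matrix.mul_assoc]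

lemma re_trace_conjTranspose_mul_sylvester (σ ρ : Matrix n n ℂ) (t : ℝ) (Z : Matrix n n ℂ) :
    (Zᴴ * sylvester σ ρ t Z).trace.re =
      (Zᴴ * σ * Z).trace.re + t * (Z * ρ * Zᴴ).trace.re := by
  have hcycle : (Zᴴ * (Z * ρ)).trace = (Z * ρ * Zᴴ).trace := Matrix.trace_mul_comm _ _
  simp only [sylvester, Matrix.mul_add, Matrix.mul_smul, trace_add, trace_smul, hcycle,
    Complex.add_re, Complex.smul_re, smul_eq_mul, Matrix.mul_assoc]

lemma re_trace_conjTranspose_mul_sylvester_nonneg {σ ρ : Matrix n n ℂ} (hσ : σ.PosSemidef)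
    (hρ : ρ.PosSemidef) {t : ℝ} (ht : 0 ≤ t) (Z : Matrix n n ℂ) :
    0 ≤ (Zᴴ * sylvester σ ρ t Z).trace.re := by
  rw [re_trace_conjTranspose_mul_sylvester]
  exact add_nonneg (Complex.nonneg_iff.1 (hσ.conjTranspose_mul_mul_same Z).trace_nonneg).1
    (mul_nonneg ht (Complex.nonneg_iff.1 (hρ.mul_mul_conjTranspose_same Z).trace_nonneg).1)

lemma mul_eq_zero_of_re_trace_conjTranspose_mul_sylvester {σ ρ : Matrix n n ℂ}
    (hσ : σ.PosSemidef) (hρ : ρ.PosSemidef) {t : ℝ} (ht : 0 < t) {Z : Matrix n n ℂ}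
    (hZ : (Zᴴ * sylvester σ ρ t Z).trace.re = 0) : Z * ρ = 0 := by
  have hσZ := Complex.nonneg_iff.1 (hσ.conjTranspose_mul_mul_same Z).trace_nonneg
  have hρZ := Complex.nonneg_iff.1 (hρ.mul_mul_conjTranspose_same Z).trace_nonneg
  rw [re_trace_conjTranspose_mul_sylvester,
    add_eq_zero_iff_of_nonneg hσZ.1 (mul_nonneg ht.le hρZ.1)] at hZ
  exact mul_eq_zero_of_trace_mul_mul_conjTranspose_eq_zero hρ <|
    Complex.ext ((mul_eq_zero_iff_left ht.ne').1 hZ.2) hρZ.2.symm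

variable [DecidableEq n]

/-- The solution `X` of the Sylvester equation `σ X + t X ρ = ρ`, for positive semidefinite `σ`
and `ρ` and `t > 0`. In terms of the relative modular operator `Δ : X ↦ σ X ρ⁻¹` this is
`(Δ + t)⁻¹ 1`. -/
def modularResolvent (σ ρ : Matrix n n ℂ) (t : ℝ) : Matrix n n ℂ :=
  cfc₂ σ ρ fun x y => y / (x + t * y)

lemma sylvester_modularResolvent {σ ρ : Matrix n n ℂ} (hσ : σ.PosSemidef) (hρ : ρ.PosSemidef)
    {t : ℝ} (ht : 0 < t) : sylvester σ ρ t (modularResolvent σ ρ t) = ρ := by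
  have hσX : σ * modularResolvent σ ρ t = cfc₂ σ ρ fun x y => x * (y / (x + t * y)) := by
    nth_rewrite 1 [← cfc_eq_self hσ.isHermitian]
    exact cfc_mul_cfc₂ σ ρ _ _
  have hXρ : modularResolvent σ ρ t * ρ = cfc₂ σ ρ fun x y => y / (x + t * y) * y := by
    nth_rewrite 2 [← cfc_eq_self hρ.isHermitian]
    exact cfc₂_mul_cfc σ ρ _ _
  rw [sylvester, hσX, hXρ, ← map_smul, ← map_add]
  refine .trans ?_ ((cfc₂_right hσ.isHermitian hρ.isHermitian _).trans
    (cfc_eq_self hρ.isHermitian))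
  refine cfc₂_congr fun x hx y hy => ?_
  have hx0 := nonneg_of_mem_realSpectrum hσ hx
  obtain rfl | hy0 := (nonneg_of_mem_realSpectrum hρ hy).eq_or_lt
  · simp
  · have : x + t * y ≠ 0 := by positivity
    simp only [Pi.add_apply, Pi.smul_apply, smul_eq_mul]
    field_simp

end Resolvent

section LogPotential

variable {n : Type*} [Fintype n] [DecidableEq n]

/-- The support of `ρ` is contained in the support of `σ`, expressed as the vanishing of `ρ` on the
kernel of `σ`. -/
def SuppLE (ρ σ : Matrix n n ℂ) : Prop := eigenProj σ 0 * ρ = 0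

/-- The (Umegaki) relative entropy `Tr[ρ (log ρ - log σ)]`. As `Real.log 0 = 0`, this is the
standard quantity only when `SuppLE ρ σ`; the standard one is infinite otherwise. -/
def relEntropy (ρ σ : Matrix n n ℂ) : ℝ :=
  (cfc Real.log ρ * ρ).trace.re - (cfc Real.log σ * ρ).trace.re

/-- The weights `Tr[E_x(σ) E_y(ρ) ρ]` of the joint distribution of the eigenvalues of `σ` and `ρ`
(a Nussbaum–Szkoła distribution). -/
def spectralWeight (σ ρ : Matrix n n ℂ) (x y : ℝ) : ℝ :=
  (eigenProj σ x * eigenProj ρ y * ρ).trace.re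

/-- `Tr[log(L_σ + t R_ρ)(1) ρ]`, with `L_σ` and `R_ρ` the multiplications by `σ` on the left and by
`ρ` on the right. It interpolates between `Tr[ρ log σ]` at `t = 0` and, up to `Tr[ρ] log t`,
`Tr[ρ log ρ]` at `t = ∞`. -/
def logPotential (σ ρ : Matrix n n ℂ) (t : ℝ) : ℝ :=
  (cfc₂ σ ρ (fun x y => Real.log (x + t * y)) * ρ).trace.re

variable {σ ρ : Matrix n n ℂ}

lemma re_trace_cfc₂_mul (σ ρ : Matrix n n ℂ) (h : ℝ → ℝ → ℝ) :
    (cfc₂ σ ρ h * ρ).trace.re =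
      ∑ x ∈ realSpectrum σ, ∑ y ∈ realSpectrum ρ, h x y * spectralWeight σ ρ x y := by
  simp only [cfc₂_apply, Finset.sum_mul, trace_sum, Complex.re_sum, smul_mul_assoc, trace_smul,
    Complex.smul_re, smul_eq_mul, spectralWeight]

lemma eigenProj_mul_self_right (hρ : ρ.IsHermitian) (y : ℝ) :
    eigenProj ρ y * ρ = y • eigenProj ρ y := by
  nth_rewrite 2 [← cfc_eq_self hρ]
  exact eigenProj_mul_cfc _ ρ y

lemma SuppLE.eigenProj_mul_eigenProj (h : SuppLE ρ σ) (hρ : ρ.IsHermitian) {y : ℝ} (hy : y ≠ 0) :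
    eigenProj σ 0 * eigenProj ρ y = 0 :=
  mul_cfc_eq_zero hρ h (Pi.single_eq_of_ne' hy 1)

lemma SuppLE.mul_eq_zero (h : SuppLE ρ σ) (hσ : σ.PosSemidef) {Z : Matrix n n ℂ}
    (hZ : Z * σ = 0) : Z * ρ = 0 := by
  have hproj : Z * (1 - eigenProj σ 0) = 0 := by
    rw [← cfc_sqrt_mul_cfc_inv_sqrt hσ, ← Matrix.mul_assoc,
      mul_cfc_eq_zero hσ.isHermitian hZ Real.sqrt_zero, Matrix.zero_mul]
  have hρ : (1 - eigenProj σ 0) * ρ = ρ := by rw [Matrix.sub_mul, h, Matrix.one_mul, sub_zero]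
  rw [← hρ, ← Matrix.mul_assoc, hproj, Matrix.zero_mul]

lemma SuppLE.one_sub_eigenProj_mul_cfc_sqrt (h : SuppLE ρ σ) (hρ : ρ.IsHermitian) :
    (1 - eigenProj σ 0) * cfc Real.sqrt ρ = cfc Real.sqrt ρ := by
  rw [Matrix.sub_mul, mul_cfc_eq_zero hρ h Real.sqrt_zero, Matrix.one_mul, sub_zero]

lemma pos_of_spectralWeight_ne_zero (hσ : σ.PosSemidef) (hρ : ρ.PosSemidef) (hsupp : SuppLE ρ σ)
    {x y : ℝ} (hx : x ∈ realSpectrum σ) (hy : y ∈ realSpectrum ρ)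
    (hxy : spectralWeight σ ρ x y ≠ 0) : 0 < x ∧ 0 < y := by
  have hy0 : y ≠ 0 := by
    rintro rfl
    simp [spectralWeight, Matrix.mul_assoc, eigenProj_mul_self_right hρ.isHermitian] at hxy
  refine ⟨(nonneg_of_mem_realSpectrum hσ hx).lt_of_ne' ?_,
    (nonneg_of_mem_realSpectrum hρ hy).lt_of_ne' hy0⟩
  rintro rfl
  simp [spectralWeight, hsupp.eigenProj_mul_eigenProj hρ.isHermitian hy0] at hxy

lemma logPotential_zero (hσ : σ.IsHermitian) (hρ : ρ.IsHermitian) :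
    logPotential σ ρ 0 = (cfc Real.log σ * ρ).trace.re := by
  simp only [logPotential, zero_mul, add_zero, cfc₂_left hσ hρ]

lemma hasDerivAt_logPotential (hσ : σ.PosSemidef) (hρ : ρ.PosSemidef) (hsupp : SuppLE ρ σ) {t : ℝ}
    (ht : 0 ≤ t) :
    HasDerivAt (logPotential σ ρ) (modularResolvent σ ρ t * ρ).trace.re t := by
  unfold logPotential modularResolvent
  simp only [re_trace_cfc₂_mul]
  refine HasDerivAt.fun_sum fun x hx => HasDerivAt.fun_sum fun y hy => ?_
  obtain hxy | hxy := eq_or_ne (spectralWeight σ ρ x y) 0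
  · simpa only [hxy, mul_zero] using hasDerivAt_const t (0 : ℝ)
  · obtain ⟨hx0, hy0⟩ := pos_of_spectralWeight_ne_zero hσ hρ hsupp hx hy hxy
    refine HasDerivAt.mul_const (HasDerivAt.log ?_ (by positivity)) _
    exact (hasDerivAt_mul_const y).const_add x

lemma tendsto_log_add_mul_sub_log (x : ℝ) {y : ℝ} (hy : 0 < y) :
    Tendsto (fun t => Real.log (x + t * y) - Real.log t) atTop (𝓝 (Real.log y)) := by
  have hlim : Tendsto (fun t => x / t + y) atTop (𝓝 y) := by
    simpa using (tendsto_const_nhds.div_atTop tendsto_id).add_const y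
  refine ((Real.continuousAt_log hy.ne').tendsto.comp hlim).congr' ?_
  filter_upwards [eventually_gt_atTop 0, hlim.eventually_ne hy.ne'] with t ht hne
  rw [Function.comp_apply, eq_sub_iff_add_eq, ← Real.log_mul hne ht.ne']
  congr 1
  field_simp

lemma tendsto_logPotential_sub_log (hσ : σ.PosSemidef) (hρ : ρ.PosSemidef) (hsupp : SuppLE ρ σ) :
    Tendsto (fun t => logPotential σ ρ t - ρ.trace.re * Real.log t) atTop
      (𝓝 (cfc Real.log ρ * ρ).trace.re) := by
  have hdiff (t : ℝ) : logPotential σ ρ t - ρ.trace.re * Real.log t =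
      (cfc₂ σ ρ (fun x y => Real.log (x + t * y) - Real.log t) * ρ).trace.re := by
    have hsplit : (fun x y => Real.log (x + t * y) - Real.log t) =
        (fun x y => Real.log (x + t * y)) - Real.log t • (1 : ℝ → ℝ → ℝ) := by
      ext; simp
    rw [hsplit, map_sub, map_smul, cfc₂_one hσ.isHermitian hρ.isHermitian, Matrix.sub_mul,
      trace_sub, Complex.sub_re, smul_mul_assoc, Matrix.one_mul, trace_smul, Complex.smul_re,
      smul_eq_mul, mul_comm, logPotential]
  simp only [hdiff, ← cfc₂_right hσ.isHermitian hρ.isHermitian, re_trace_cfc₂_mul]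
  refine tendsto_finsetSum _ fun x hx => tendsto_finsetSum _ fun y hy => ?_
  obtain hxy | hxy := eq_or_ne (spectralWeight σ ρ x y) 0
  · simpa only [hxy, mul_zero] using tendsto_const_nhds
  · exact (tendsto_log_add_mul_sub_log x
      (pos_of_spectralWeight_ne_zero hσ hρ hsupp hx hy hxy).2).mul_const _

end LogPotential

section Restriction

variable {A N : Type*} [Fintype A] [DecidableEq A] [Fintype N] [DecidableEq N]

/-- `ρ'` represents the restriction of the functional `Tr[· ρ]` along the embedding `ι` of a
subsystem. -/
def IsRestriction (ι : Matrix A A ℂ →⋆ₐ[ℂ] Matrix N N ℂ) (ρ : Matrix N N ℂ)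
    (ρ' : Matrix A A ℂ) : Prop :=
  ∀ X, (ι X * ρ).trace = (X * ρ').trace

variable {ι : Matrix A A ℂ →⋆ₐ[ℂ] Matrix N N ℂ} {σ ρ : Matrix N N ℂ} {σ' ρ' : Matrix A A ℂ}

lemma map_conjTranspose (X : Matrix A A ℂ) : ι Xᴴ = (ι X)ᴴ := map_star ι X

lemma map_smul_real (c : ℝ) (X : Matrix A A ℂ) : ι (c • X) = c • ι X :=
  map_smul ((ι : Matrix A A ℂ →ₗ[ℂ] Matrix N N ℂ).restrictScalars ℝ) c X

lemma IsRestriction.trace_eq (hρ : IsRestriction ι ρ ρ') : ρ.trace = ρ'.trace := by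
  simpa using hρ 1

lemma IsRestriction.suppLE (hσι : IsRestriction ι σ σ') (hρι : IsRestriction ι ρ ρ')
    (hσ : σ.PosSemidef) (hσ' : σ'.IsHermitian) (hρ' : ρ'.PosSemidef) (hsupp : SuppLE ρ σ) :
    SuppLE ρ' σ' := by
  let P := ι (eigenProj σ' 0)
  have hPσ : P * σ = 0 := by
    refine mul_eq_zero_of_trace_mul_mul_conjTranspose_eq_zero hσ ?_
    rw [Matrix.trace_mul_comm, ← Matrix.mul_assoc, ← map_conjTranspose,
      (isHermitian_eigenProj σ' 0).eq, ← map_mul, eigenProj_mul_self, hσι,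
      eigenProj_mul_self_right hσ', zero_smul, trace_zero]
  have hPρ : P * ρ = 0 := hsupp.mul_eq_zero hσ hPσ
  rw [SuppLE, eigenProj_mul_eq_zero_iff hρ', ← hρι]
  exact hPρ ▸ trace_zero ..

lemma IsRestriction.trace_conjTranspose_mul_sylvester (hσ : IsRestriction ι σ σ')
    (hρ : IsRestriction ι ρ ρ') (t : ℝ) (X : Matrix A A ℂ) :
    ((ι X)ᴴ * sylvester σ ρ t (ι X)).trace = (Xᴴ * sylvester σ' ρ' t X).trace := by
  have hleft : ((ι X)ᴴ * (σ * ι X)).trace = (Xᴴ * (σ' * X)).trace := by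
    rw [Matrix.trace_mul_comm, Matrix.mul_assoc, Matrix.trace_mul_comm, ← map_conjTranspose,
      ← map_mul, hσ, ← Matrix.trace_mul_comm, ← Matrix.mul_assoc, Matrix.trace_mul_comm]
  have hright : ((ι X)ᴴ * (ι X * ρ)).trace = (Xᴴ * (X * ρ')).trace := by
    rw [← Matrix.mul_assoc, ← map_conjTranspose, ← map_mul, hρ, Matrix.mul_assoc]
  simp only [sylvester, Matrix.mul_add, Matrix.mul_smul, trace_add, trace_smul, hleft, hright]

-- For Hermitian `ρ` and `σ`, this is the defect in the variational characterization of the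
-- solution `X`, evaluated at the trial point `ι X'`.
lemma IsRestriction.re_trace_sylvester_sub (hσι : IsRestriction ι σ σ')
    (hρι : IsRestriction ι ρ ρ') (hσ : σ.IsHermitian) (hρ : ρ.IsHermitian) {t : ℝ}
    {X : Matrix N N ℂ} {X' : Matrix A A ℂ} (hX : sylvester σ ρ t X = ρ)
    (hX' : sylvester σ' ρ' t X' = ρ') :
    ((ι X' - X)ᴴ * sylvester σ ρ t (ι X' - X)).trace.re =
      (X * ρ).trace.re - (X' * ρ').trace.re := by
  have hsub : sylvester σ ρ t (ι X' - X) = sylvester σ ρ t (ι X') - ρ := by rw [sylvester_sub, hX]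
  have hquad : ((ι X')ᴴ * sylvester σ ρ t (ι X')).trace = ((ι X')ᴴ * ρ).trace := by
    rw [hσι.trace_conjTranspose_mul_sylvester hρι, hX', ← hρι, map_conjTranspose]
  have hcross : (Xᴴ * sylvester σ ρ t (ι X')).trace = (X' * ρ').trace := by
    rw [_root_.trace_conjTranspose_mul_sylvester hσ hρ, hX, hρ.eq, Matrix.trace_mul_comm, hρι]
  have hconj : (Xᴴ * ρ).trace.re = (X * ρ).trace.re := by
    rw [← Complex.conj_re, ← Complex.star_def, ← trace_conjTranspose, conjTranspose_mul, hρ.eq,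
      conjTranspose_conjTranspose, Matrix.trace_mul_comm]
  rw [hsub, conjTranspose_sub, Matrix.sub_mul, Matrix.mul_sub, Matrix.mul_sub]
  simp only [trace_sub, hquad, hcross, Complex.sub_re, hconj]
  ring

end Restriction

section EqualityCase

variable {A N : Type*} [Fintype A] [DecidableEq A] [Fintype N] [DecidableEq N]
  {ι : Matrix A A ℂ →⋆ₐ[ℂ] Matrix N N ℂ} {σ ρ : Matrix N N ℂ} {σ' ρ' : Matrix A A ℂ}

lemma cfc₂_div_eq_sum_modularResolvent (hσ : σ.PosSemidef) (hρ : ρ.PosSemidef) {g a : ℝ → ℝ}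
    (hg : g 0 = 0) {Λ : Finset ℝ} (hΛ : ∀ t ∈ Λ, 0 ≤ t)
    (ha : ∀ x ∈ realSpectrum σ, ∀ y ∈ realSpectrum ρ,
      ∑ t ∈ Λ, a t * (x / y + (t + 1))⁻¹ = g (x / y)) :
    cfc₂ σ ρ (fun x y => g (x / y)) = ∑ t ∈ Λ, a t • modularResolvent σ ρ (t + 1) := by
  simp only [modularResolvent, ← map_smul, ← map_sum]
  refine cfc₂_congr fun x hx y hy => ?_
  simp only [Finset.sum_apply, Pi.smul_apply, smul_eq_mul]
  obtain rfl | hy0 := (nonneg_of_mem_realSpectrum hρ hy).eq_or_lt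
  · simp [hg]
  · rw [← ha x hx y hy]
    refine Finset.sum_congr rfl fun t ht => ?_
    have hx0 := nonneg_of_mem_realSpectrum hσ hx
    have ht0 := hΛ t ht
    field_simp

lemma cfc₂_inv_sqrt_div (hσ : σ.PosSemidef) (hρ : ρ.IsHermitian) :
    cfc₂ σ ρ (fun x y => (√(x / y))⁻¹) = cfc (fun x => (√x)⁻¹) σ * cfc Real.sqrt ρ := by
  rw [← cfc₂_mul hσ.isHermitian hρ]
  refine cfc₂_congr fun x hx y _ => ?_
  rw [Real.sqrt_div (nonneg_of_mem_realSpectrum hσ hx), inv_div, div_eq_inv_mul]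

namespace IsRestriction

theorem map_modularResolvent_mul_eq (hσι : IsRestriction ι σ σ') (hρι : IsRestriction ι ρ ρ')
    (hσ : σ.PosSemidef) (hρ : ρ.PosSemidef) (hσ' : σ'.PosSemidef) (hρ' : ρ'.PosSemidef)
    (hsupp : SuppLE ρ σ) (hD : relEntropy ρ σ = relEntropy ρ' σ') {t : ℝ} (ht : 0 < t) :
    ι (modularResolvent σ' ρ' t) * ρ = modularResolvent σ ρ t * ρ := by
  have hsupp' : SuppLE ρ' σ' := hσι.suppLE hρι hσ hσ'.isHermitian hρ' hsupp
  let F s := logPotential σ ρ s - logPotential σ' ρ' s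
  let F' s := (modularResolvent σ ρ s * ρ).trace.re - (modularResolvent σ' ρ' s * ρ').trace.re
  let Z s := ι (modularResolvent σ' ρ' s) - modularResolvent σ ρ s
  have hF (s) (hs : 0 ≤ s) : HasDerivAt F (F' s) s :=
    (hasDerivAt_logPotential hσ hρ hsupp hs).sub (hasDerivAt_logPotential hσ' hρ' hsupp' hs)
  have hF' (s) (hs : 0 < s) : ((Z s)ᴴ * sylvester σ ρ s (Z s)).trace.re = F' s :=
    hσι.re_trace_sylvester_sub hρι hσ.isHermitian hρ.isHermitian
      (sylvester_modularResolvent hσ hρ hs) (sylvester_modularResolvent hσ' hρ' hs)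
  have hlim : Tendsto F atTop (𝓝 (F 0)) := by
    have hF0 : F 0 = (cfc Real.log ρ * ρ).trace.re - (cfc Real.log ρ' * ρ').trace.re := by
      simp only [F, logPotential_zero hσ.isHermitian hρ.isHermitian,
        logPotential_zero hσ'.isHermitian hρ'.isHermitian]
      rw [relEntropy, relEntropy] at hD
      linarith
    rw [hF0]
    refine ((tendsto_logPotential_sub_log hσ hρ hsupp).sub
      (tendsto_logPotential_sub_log hσ' hρ' hsupp')).congr fun s => ?_
    rw [hρι.trace_eq, sub_sub_sub_cancel_right]
  have hF't : F' t = 0 := deriv_eq_zero_of_nonneg_of_tendsto hF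
    (fun s hs => hF' s hs ▸ re_trace_conjTranspose_mul_sylvester_nonneg hσ hρ hs.le _) hlim ht
  have hZρ : Z t * ρ = 0 :=
    mul_eq_zero_of_re_trace_conjTranspose_mul_sylvester hσ hρ ht ((hF' t ht).trans hF't)
  rwa [Matrix.sub_mul, sub_eq_zero] at hZρ

theorem map_cfc₂_div_mul_eq (hσι : IsRestriction ι σ σ') (hρι : IsRestriction ι ρ ρ')
    (hσ : σ.PosSemidef) (hρ : ρ.PosSemidef) (hσ' : σ'.PosSemidef) (hρ' : ρ'.PosSemidef)
    (hsupp : SuppLE ρ σ) (hD : relEntropy ρ σ = relEntropy ρ' σ') {g : ℝ → ℝ} (hg : g 0 = 0) :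
    ι (cfc₂ σ' ρ' fun x y => g (x / y)) * ρ = cfc₂ σ ρ (fun x y => g (x / y)) * ρ := by
  let q := Finset.image₂ (fun x y : ℝ => x / y) (realSpectrum σ) (realSpectrum ρ)
  let q' := Finset.image₂ (fun x y : ℝ => x / y) (realSpectrum σ') (realSpectrum ρ')
  have hq : ∀ t ∈ q ∪ q', 0 ≤ t := by
    intro t ht
    obtain ht | ht := Finset.mem_union.1 ht <;> obtain ⟨x, hx, y, hy, rfl⟩ := Finset.mem_image₂.1 ht
    · exact div_nonneg (nonneg_of_mem_realSpectrum hσ hx) (nonneg_of_mem_realSpectrum hρ hy)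
    · exact div_nonneg (nonneg_of_mem_realSpectrum hσ' hx) (nonneg_of_mem_realSpectrum hρ' hy)
  obtain ⟨a, ha⟩ := exists_sum_mul_inv_sub_eq (s := q ∪ q') (v := fun t => -(t + 1))
    (fun s _ t _ h => by simpa using h) (fun x hx t ht => by linarith [hq x hx, hq t ht]) g
  simp only [sub_neg_eq_add] at ha
  rw [cfc₂_div_eq_sum_modularResolvent hσ hρ hg hq fun x hx y hy =>
      ha _ (Finset.mem_union_left _ (Finset.mem_image₂_of_mem hx hy)),
    cfc₂_div_eq_sum_modularResolvent hσ' hρ' hg hq fun x hx y hy =>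
      ha _ (Finset.mem_union_right _ (Finset.mem_image₂_of_mem hx hy)),
    map_sum, Finset.sum_mul, Finset.sum_mul]
  refine Finset.sum_congr rfl fun t ht => ?_
  rw [map_smul_real, smul_mul_assoc, smul_mul_assoc, hσι.map_modularResolvent_mul_eq hρι hσ hρ hσ'
    hρ' hsupp hD (by linarith [hq t ht])]

theorem cfc_sqrt_mul_map_mul_eq (hσι : IsRestriction ι σ σ') (hρι : IsRestriction ι ρ ρ')
    (hσ : σ.PosSemidef) (hρ : ρ.PosSemidef) (hσ' : σ'.PosSemidef) (hρ' : ρ'.PosSemidef)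
    (hsupp : SuppLE ρ σ) (hD : relEntropy ρ σ = relEntropy ρ' σ') :
    cfc Real.sqrt σ * ι (cfc (fun x => (√x)⁻¹) σ' * cfc Real.sqrt ρ') * cfc Real.sqrt ρ =
      cfc Real.sqrt ρ * cfc Real.sqrt ρ := by
  have hι := hσι.map_cfc₂_div_mul_eq hρι hσ hρ hσ' hρ' hsupp hD (g := fun x => (√x)⁻¹) (by simp)
  rw [cfc₂_inv_sqrt_div hσ hρ.isHermitian, cfc₂_inv_sqrt_div hσ' hρ'.isHermitian] at hι
  rw [← sub_eq_zero, ← Matrix.sub_mul]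
  refine mul_cfc_eq_zero hρ.isHermitian ?_ Real.sqrt_zero
  rw [Matrix.sub_mul, Matrix.mul_assoc, hι, ← Matrix.mul_assoc, ← Matrix.mul_assoc,
    cfc_sqrt_mul_cfc_inv_sqrt hσ, hsupp.one_sub_eigenProj_mul_cfc_sqrt hρ.isHermitian, sub_self]

theorem cfc_sqrt_mul_map_eq_cfc_sqrt (hσι : IsRestriction ι σ σ') (hρι : IsRestriction ι ρ ρ')
    (hσ : σ.PosSemidef) (hρ : ρ.PosSemidef) (hσ' : σ'.PosSemidef) (hρ' : ρ'.PosSemidef)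
    (hsupp : SuppLE ρ σ) (hD : relEntropy ρ σ = relEntropy ρ' σ') :
    cfc Real.sqrt σ * ι (cfc (fun x => (√x)⁻¹) σ' * cfc Real.sqrt ρ') = cfc Real.sqrt ρ := by
  let B := cfc (fun x => (√x)⁻¹) σ' * cfc Real.sqrt ρ'
  refine eq_of_mul_self_eq_of_trace_eq (isHermitian_cfc _ ρ)
    (hσι.cfc_sqrt_mul_map_mul_eq hρι hσ hρ hσ' hρ' hsupp hD) ?_
  have hBσ : Bᴴ * σ' * B = ρ' := by
    have hsupp' := hσι.suppLE hρι hσ hσ'.isHermitian hρ' hsupp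
    rw [conjTranspose_mul, (isHermitian_cfc _ ρ').eq, (isHermitian_cfc _ σ').eq, Matrix.mul_assoc,
      Matrix.mul_assoc, ← Matrix.mul_assoc σ', ← Matrix.mul_assoc (cfc _ σ'),
      ← Matrix.mul_assoc (cfc _ σ'), cfc_inv_sqrt_mul_mul_cfc_inv_sqrt hσ',
      hsupp'.one_sub_eigenProj_mul_cfc_sqrt hρ'.isHermitian, cfc_sqrt_mul_self hρ']
  calc (cfc Real.sqrt σ * ι B * (cfc Real.sqrt σ * ι B)ᴴ).trace
      = (ι (B * Bᴴ) * (cfc Real.sqrt σ * cfc Real.sqrt σ)).trace := by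
        rw [conjTranspose_mul, (isHermitian_cfc _ σ).eq, map_mul ι B, map_conjTranspose,
          Matrix.mul_assoc, Matrix.trace_mul_comm]
        simp only [Matrix.mul_assoc]
    _ = (Bᴴ * σ' * B).trace := by
        rw [cfc_sqrt_mul_self hσ, hσι, Matrix.mul_assoc, Matrix.trace_mul_comm]
    _ = (cfc Real.sqrt ρ * cfc Real.sqrt ρ).trace := by
        rw [hBσ, ← hρι.trace_eq, cfc_sqrt_mul_self hρ]

end IsRestriction

end EqualityCase

lemma IsState.nonempty {n : Type*} [Fintype n] {ρ : Matrix n n ℂ} (hρ : IsState ρ) :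
    Nonempty n := by
  by_contra hempty
  rw [not_nonempty_iff] at hempty
  simpa [Matrix.trace] using hρ.2

section PartialTrace

variable {R Q E A B : Type*}

lemma posSemidef_ptraceLeft [Fintype A] {M : Matrix (A × B) (A × B) ℂ} (hM : M.PosSemidef) :
    (ptraceLeft M).PosSemidef := by
  have hsum : ptraceLeft M = ∑ a, M.submatrix (fun b => (a, b)) (fun b => (a, b)) := by
    ext x y
    simp [ptraceLeft, Matrix.sum_apply]
  exact hsum ▸ posSemidef_sum _ fun a _ => hM.submatrix _

lemma posSemidef_ptraceRight [Fintype B] {M : Matrix (A × B) (A × B) ℂ} (hM : M.PosSemidef) :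
    (ptraceRight M).PosSemidef := by
  have hsum : ptraceRight M = ∑ b, M.submatrix (fun a => (a, b)) (fun a => (a, b)) := by
    ext x y
    simp [ptraceRight, Matrix.sum_apply]
  exact hsum ▸ posSemidef_sum _ fun b _ => hM.submatrix _

lemma posSemidef_ptrace3E [Fintype E] {M : Matrix (R × Q × E) (R × Q × E) ℂ}
    (hM : M.PosSemidef) : (ptrace3E M).PosSemidef :=
  posSemidef_ptraceRight (hM.submatrix (Equiv.prodAssoc R Q E))

lemma ptraceRight_ptraceLeft [Fintype R] [Fintype E] (M : Matrix (R × Q × E) (R × Q × E) ℂ) :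
    ptraceRight (ptraceLeft M) = ptraceLeft (ptrace3E M) := by
  ext x y
  exact Finset.sum_comm

lemma trace_one_kronecker_mul [Fintype A] [DecidableEq A] [Fintype B] (X : Matrix B B ℂ)
    (M : Matrix (A × B) (A × B) ℂ) :
    (((1 : Matrix A A ℂ) ⊗ₖ X) * M).trace = (X * ptraceLeft M).trace := by
  simp only [Matrix.trace, Matrix.diag_apply, Matrix.mul_apply, ptraceLeft, Matrix.of_apply,
    Fintype.sum_prod_type, kroneckerMap_apply, Matrix.one_apply, ite_mul, one_mul, zero_mul,
    Finset.sum_ite_irrel, Finset.sum_const_zero, Finset.sum_ite_eq, Finset.mem_univ, if_true,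
    Finset.mul_sum]
  rw [Finset.sum_comm]
  exact Finset.sum_congr rfl fun b _ => Finset.sum_comm

lemma ptraceRight_kronecker_one_mul_mul [Fintype A] [Fintype B] [DecidableEq B]
    (X Y : Matrix A A ℂ) (M : Matrix (A × B) (A × B) ℂ) :
    ptraceRight ((X ⊗ₖ (1 : Matrix B B ℂ)) * M * (Y ⊗ₖ (1 : Matrix B B ℂ))) =
      X * ptraceRight M * Y := by
  ext x y
  simp only [ptraceRight, Matrix.of_apply, Matrix.mul_apply, Fintype.sum_prod_type,
    kroneckerMap_apply, Matrix.one_apply, mul_ite, mul_one, mul_zero, ite_mul, zero_mul,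
    Finset.sum_ite_eq, Finset.sum_ite_eq', Finset.mem_univ, if_true, Finset.mul_sum,
    Finset.sum_mul]
  rw [Finset.sum_comm]
  exact Finset.sum_congr rfl fun a _ => Finset.sum_comm

lemma ptrace3E_one_kronecker [DecidableEq R] [Fintype E] (M : Matrix (Q × E) (Q × E) ℂ) :
    ptrace3E ((1 : Matrix R R ℂ) ⊗ₖ M) = (1 : Matrix R R ℂ) ⊗ₖ ptraceRight M := by
  ext x y
  simp [ptrace3E, ptraceRight, kroneckerMap_apply, Finset.mul_sum]

lemma trace_submatrix_ptrace3E [Fintype Q] [Fintype E]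
    (M : Matrix (R × Q × E) (R × Q × E) ℂ) (r r' : R) :
    ((ptrace3E M).submatrix (Prod.mk r) (Prod.mk r')).trace =
      (M.submatrix (Prod.mk r) (Prod.mk r')).trace := by
  simp [Matrix.trace, ptrace3E, Fintype.sum_prod_type]

lemma ptraceLeft_kronecker_one_mul [Fintype A] [Fintype B] [DecidableEq B] (P : Matrix A A ℂ)
    (M : Matrix (A × B) (A × B) ℂ) :
    ptraceLeft ((P ⊗ₖ (1 : Matrix B B ℂ)) * M) =
      ∑ a, ∑ a', P a a' • M.submatrix (Prod.mk a') (Prod.mk a) := by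
  ext x y
  simp [ptraceLeft, Matrix.mul_apply, Matrix.sum_apply, Fintype.sum_prod_type, Matrix.one_apply]

variable [Fintype R] [DecidableEq R] [Fintype Q] [DecidableEq Q] [Fintype E] [DecidableEq E]
  [Fintype A] [DecidableEq A] [Fintype B] [DecidableEq B]

/-- The embedding `X ↦ 1 ⊗ X` of the operators on the second factor. -/
def oneKroneckerHom (A B : Type*) [Fintype A] [DecidableEq A] [Fintype B] [DecidableEq B] :
    Matrix B B ℂ →⋆ₐ[ℂ] Matrix (A × B) (A × B) ℂ where
  toFun X := (1 : Matrix A A ℂ) ⊗ₖ X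
  map_one' := one_kronecker_one
  map_mul' X Y := by rw [← mul_kronecker_mul, Matrix.one_mul]
  map_zero' := kronecker_zero _
  map_add' X Y := kronecker_add _ X Y
  commutes' c := by
    simp only [Algebra.algebraMap_eq_smul_one, kronecker_smul, one_kronecker_one]
  map_star' X := by
    simp only [star_eq_conjTranspose, conjTranspose_kronecker, conjTranspose_one]

/-- The embedding `X ↦ X ⊗ 1` of the operators on `R ⊗ Q` into the operators on `R ⊗ Q ⊗ E`. -/
def kroneckerOneHom (R Q E : Type*) [Fintype R] [DecidableEq R] [Fintype Q] [DecidableEq Q]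
    [Fintype E] [DecidableEq E] :
    Matrix (R × Q) (R × Q) ℂ →⋆ₐ[ℂ] Matrix (R × Q × E) (R × Q × E) ℂ where
  toFun X := reindex (.prodAssoc R Q E) (.prodAssoc R Q E) (X ⊗ₖ (1 : Matrix E E ℂ))
  map_one' := by simp
  map_mul' X Y := by
    simp only [reindex_apply, submatrix_mul_equiv, ← mul_kronecker_mul, Matrix.one_mul]
  map_zero' := by simp
  map_add' X Y := by
    rw [add_kronecker]
    rfl
  commutes' c := by
    rw [Algebra.algebraMap_eq_smul_one, smul_kronecker, one_kronecker_one, reindex_apply,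
      submatrix_smul, Pi.smul_apply, Pi.smul_apply, submatrix_one_equiv,
      Algebra.algebraMap_eq_smul_one]
  map_star' X := by
    simp only [star_eq_conjTranspose, reindex_apply, conjTranspose_submatrix,
      conjTranspose_kronecker, conjTranspose_one]

lemma kroneckerOneHom_apply (X : Matrix (R × Q) (R × Q) ℂ) (x y : R × Q × E) :
    kroneckerOneHom R Q E X x y =
      X (x.1, x.2.1) (y.1, y.2.1) * (1 : Matrix E E ℂ) x.2.2 y.2.2 :=
  rfl

lemma kroneckerOneHom_one_kronecker (Y : Matrix Q Q ℂ) :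
    kroneckerOneHom R Q E ((1 : Matrix R R ℂ) ⊗ₖ Y) =
      (1 : Matrix R R ℂ) ⊗ₖ (Y ⊗ₖ (1 : Matrix E E ℂ)) :=
  kronecker_assoc 1 Y 1

lemma isRestriction_ptrace3E (M : Matrix (R × Q × E) (R × Q × E) ℂ) :
    IsRestriction (kroneckerOneHom R Q E) M (ptrace3E M) := by
  intro X
  simp only [Matrix.trace, Matrix.diag_apply, Matrix.mul_apply, Fintype.sum_prod_type,
    kroneckerOneHom_apply, ptrace3E, Matrix.of_apply, Matrix.one_apply, Finset.mul_sum, mul_ite,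
    mul_one, mul_zero, ite_mul, zero_mul, Finset.sum_ite_eq, Finset.mem_univ, if_true]
  refine Finset.sum_congr rfl fun r _ => Finset.sum_congr rfl fun q _ => ?_
  rw [Finset.sum_comm]
  exact Finset.sum_congr rfl fun r' _ => Finset.sum_comm

lemma cfc_one_kronecker {X : Matrix B B ℂ} (hX : X.IsHermitian) (f : ℝ → ℝ) :
    cfc f ((1 : Matrix A A ℂ) ⊗ₖ X) = (1 : Matrix A A ℂ) ⊗ₖ cfc f X := by
  let φ := oneKroneckerHom A B
  have hφ : Continuous φ := φ.toAlgHom.toLinearMap.continuous_of_finiteDimensional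
  exact (StarAlgHom.map_cfc φ f X (continuousOn_realSpectrum f X) hφ hX.isSelfAdjoint
    (hX.isSelfAdjoint.map φ)).symm

end PartialTrace

section Entropy

variable {n A B : Type*} [Fintype n] [DecidableEq n] [Fintype A] [DecidableEq A] [Fintype B]
  [DecidableEq B]

lemma trace_cfc {M : Matrix n n ℂ} (hM : M.IsHermitian) (f : ℝ → ℝ) :
    (cfc f M).trace = ∑ i, (f (hM.eigenvalues i) : ℂ) := by
  rw [hM.cfc_eq, IsHermitian.cfc, Unitary.conjStarAlgAut_apply, Matrix.trace_mul_cycle,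
    Unitary.coe_star_mul_self, Matrix.one_mul, trace_diagonal]
  rfl

lemma re_trace_cfc_log_mul_self {M : Matrix n n ℂ} (hM : M.IsHermitian) :
    (cfc Real.log M * M).trace.re = -vnEntropy M := by
  nth_rewrite 2 [← cfc_eq_self hM]
  rw [cfc_mul_cfc, trace_cfc hM, vnEntropy, dif_pos hM, Complex.re_sum, ← Finset.sum_neg_distrib]
  refine Finset.sum_congr rfl fun i _ => ?_
  rw [Complex.ofReal_re, Real.negMulLog]
  ring

lemma relEntropy_one_kronecker_ptraceLeft {M : Matrix (A × B) (A × B) ℂ} (hM : M.PosSemidef) :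
    relEntropy M ((1 : Matrix A A ℂ) ⊗ₖ ptraceLeft M) = vnEntropy (ptraceLeft M) - vnEntropy M := by
  have hB := (posSemidef_ptraceLeft hM).isHermitian
  rw [relEntropy, cfc_one_kronecker hB, trace_one_kronecker_mul, re_trace_cfc_log_mul_self hB,
    re_trace_cfc_log_mul_self hM.isHermitian]
  ring

lemma suppLE_one_kronecker_ptraceLeft {M : Matrix (A × B) (A × B) ℂ} (hM : M.PosSemidef) :
    SuppLE M ((1 : Matrix A A ℂ) ⊗ₖ ptraceLeft M) := by
  have hB := (posSemidef_ptraceLeft hM).isHermitian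
  rw [SuppLE, eigenProj_mul_eq_zero_iff hM, eigenProj, cfc_one_kronecker hB,
    trace_one_kronecker_mul]
  change (eigenProj (ptraceLeft M) 0 * ptraceLeft M).trace = 0
  rw [eigenProj_mul_self_right hB, zero_smul, trace_zero]

end Entropy

section Kraus

variable {A B C κ n : Type*} [Fintype A] [Fintype κ]

/-- The completely positive map `X ↦ ∑ₖ Kₖ X Kₖᴴ` with Kraus operators `K`. -/
def krausMap (K : κ → Matrix C A ℂ) : Matrix A A ℂ →ₗ[ℂ] Matrix C C ℂ where
  toFun X := ∑ k, K k * X * (K k)ᴴ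
  map_add' X Y := by simp only [Matrix.mul_add, Matrix.add_mul, Finset.sum_add_distrib]
  map_smul' c X := by
    simp only [Matrix.mul_smul, Matrix.smul_mul, Finset.smul_sum, RingHom.id_apply]

lemma krausMap_apply (K : κ → Matrix C A ℂ) (X : Matrix A A ℂ) :
    krausMap K X = ∑ k, K k * X * (K k)ᴴ :=
  rfl

lemma krausMap_mul_left [Fintype B] (G : Matrix C B ℂ) (K : κ → Matrix B A ℂ) (X : Matrix A A ℂ) :
    krausMap (fun k => G * K k) X = G * krausMap K X * Gᴴ := by
  simp only [krausMap_apply, Matrix.mul_sum, Matrix.sum_mul, conjTranspose_mul, Matrix.mul_assoc]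

lemma idTensor_krausMap [Fintype n] [DecidableEq n] (K : κ → Matrix C A ℂ)
    (M : Matrix (n × A) (n × A) ℂ) :
    idTensor n (krausMap K) M = krausMap (fun k => (1 : Matrix n n ℂ) ⊗ₖ K k) M := by
  ext ⟨i, b⟩ ⟨i', b'⟩
  simp only [idTensor, krausMap_apply, Matrix.of_apply, Matrix.sum_apply]
  refine Finset.sum_congr rfl fun k _ => ?_
  simp [Matrix.mul_apply, Fintype.sum_prod_type, Matrix.one_apply, Finset.sum_ite_irrel, apply_ite]

lemma trace_krausMap [Fintype B] (K : κ → Matrix B A ℂ) (X : Matrix A A ℂ) :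
    (krausMap K X).trace = ((∑ k, (K k)ᴴ * K k) * X).trace := by
  rw [krausMap_apply, Matrix.sum_mul, trace_sum, trace_sum]
  refine Finset.sum_congr rfl fun k _ => ?_
  rw [Matrix.trace_mul_comm, Matrix.mul_assoc]

lemma isCPTP_krausMap [DecidableEq A] [Fintype B] {K : κ → Matrix B A ℂ}
    (hK : ∑ k, (K k)ᴴ * K k = 1) : IsCPTP (krausMap K) := by
  refine ⟨fun m M hM => ?_, fun X => by rw [trace_krausMap, hK, Matrix.one_mul]⟩
  rw [idTensor_krausMap, krausMap_apply]
  exact posSemidef_sum _ fun k _ => hM.mul_mul_conjTranspose_same _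

lemma IsCPTP.comp [Fintype B] [Fintype C] {Φ : Matrix B B ℂ →ₗ[ℂ] Matrix C C ℂ}
    {Ψ : Matrix A A ℂ →ₗ[ℂ] Matrix B B ℂ} (hΦ : IsCPTP Φ) (hΨ : IsCPTP Ψ) :
    IsCPTP (Φ ∘ₗ Ψ) :=
  ⟨fun m M hM => hΦ.1 m _ (hΨ.1 m M hM), fun X => (hΦ.2 _).trans (hΨ.2 X)⟩

/-- The rank-one Kraus operators `|b⟩⟨a| D`, which send all the mass `Tr[D X Dᴴ]` to the pure state
`|b⟩⟨b|`. -/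
def resetKraus [DecidableEq A] [DecidableEq B] (b : B) (D : Matrix A A ℂ) (a : A) : Matrix B A ℂ :=
  single b a (1 : ℂ) * D

lemma krausMap_resetKraus [DecidableEq A] [DecidableEq B] (b : B) (D X : Matrix A A ℂ) :
    krausMap (resetKraus b D) X = single b b (D * X * Dᴴ).trace := by
  have hsingle : krausMap (fun a : A => (single b a 1 : Matrix B A ℂ)) (D * X * Dᴴ) =
      single b b (D * X * Dᴴ).trace := by
    simp only [krausMap_apply, conjTranspose_single, star_one, single_mul_mul_single, one_mul,
      mul_one, Matrix.trace, Matrix.diag_apply]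
    exact (map_sum (singleAddMonoidHom (α := ℂ) b b) _ _).symm
  rw [← hsingle]
  simp only [krausMap_apply, resetKraus, conjTranspose_mul, Matrix.mul_assoc]

lemma sum_conjTranspose_resetKraus_mul [DecidableEq A] [Fintype B] [DecidableEq B] (b : B)
    (D : Matrix A A ℂ) : ∑ a, (resetKraus b D a)ᴴ * resetKraus b D a = Dᴴ * D := by
  have hsingle : ∑ a : A, (single b a (1 : ℂ))ᴴ * (single b a (1 : ℂ)) = 1 := by
    simp only [conjTranspose_single, star_one, single_mul_single_same, mul_one, sum_single_one]
  rw [← Matrix.mul_one Dᴴ, ← hsingle, Matrix.mul_sum, Matrix.sum_mul]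
  simp only [resetKraus, conjTranspose_mul, Matrix.mul_assoc]

lemma exists_isCPTP_eq_krausMap [DecidableEq A] [Fintype B] [Nonempty B] {K : κ → Matrix B A ℂ}
    (hK : (1 - ∑ k, (K k)ᴴ * K k).PosSemidef) :
    ∃ Φ : Matrix A A ℂ →ₗ[ℂ] Matrix B B ℂ, IsCPTP Φ ∧
      ∀ X, (krausMap K X).trace = X.trace → Φ X = krausMap K X := by
  classical
  obtain ⟨b⟩ := ‹Nonempty B›
  let D := cfc Real.sqrt (1 - ∑ k, (K k)ᴴ * K k)
  have hD : Dᴴ * D = 1 - ∑ k, (K k)ᴴ * K k := by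
    rw [(isHermitian_cfc _ _).eq, cfc_sqrt_mul_self hK]
  refine ⟨krausMap (Sum.elim K (resetKraus b D)), isCPTP_krausMap ?_, fun X hX => ?_⟩
  · simp only [Fintype.sum_sum_type, Sum.elim_inl, Sum.elim_inr]
    rw [sum_conjTranspose_resetKraus_mul, hD, add_sub_cancel]
  · have hDX : (D * X * Dᴴ).trace = 0 := by
      rw [Matrix.trace_mul_comm, ← Matrix.mul_assoc, hD, Matrix.sub_mul, Matrix.one_mul, trace_sub,
        ← trace_krausMap, hX, sub_self]
    have hsum : krausMap (Sum.elim K (resetKraus b D)) X =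
        krausMap K X + krausMap (resetKraus b D) X :=
      Fintype.sum_sum_type _
    rw [hsum, krausMap_resetKraus, hDX, single_zero, add_zero]

end Kraus

section KetRight

variable {Q E : Type*} [DecidableEq Q] [DecidableEq E]

/-- The operator `1 ⊗ |e⟩ : Q → Q ⊗ E`, the Kraus operator of the ampliation `X ↦ X ⊗ 1`; its
adjoint is the Kraus operator of the partial trace over `E`. -/
def ketRight (Q : Type*) [DecidableEq Q] (e : E) : Matrix (Q × E) Q ℂ :=
  (1 : Matrix (Q × E) (Q × E) ℂ).submatrix id (·, e)

lemma ketRight_apply (e : E) (x : Q × E) (q : Q) :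
    ketRight Q e x q = if x.1 = q then if x.2 = e then 1 else 0 else 0 := by
  simp only [ketRight, submatrix_apply, id_eq, Matrix.one_apply, Prod.ext_iff, ite_and]

variable [Fintype Q] [Fintype E]

lemma krausMap_ketRight (X : Matrix Q Q ℂ) :
    krausMap (ketRight (E := E) Q) X = X ⊗ₖ (1 : Matrix E E ℂ) := by
  ext x y
  simp only [krausMap_apply, Matrix.sum_apply, Matrix.mul_apply, conjTranspose_apply,
    ketRight_apply, kroneckerMap_apply, Matrix.one_apply]
  by_cases h : x.2 = y.2 <;> simp [apply_ite, h, eq_comm]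

lemma krausMap_conjTranspose_ketRight (M : Matrix (Q × E) (Q × E) ℂ) :
    krausMap (fun e => (ketRight Q e)ᴴ) M = ptraceRight M := by
  ext q q'
  simp [krausMap_apply, Matrix.sum_apply, Matrix.mul_apply, ptraceRight, ketRight_apply,
    apply_ite, Fintype.sum_prod_type]

lemma sum_ketRight_mul_conjTranspose :
    ∑ e : E, ketRight Q e * (ketRight Q e)ᴴ = 1 := by
  simpa only [krausMap_apply, Matrix.mul_one, one_kronecker_one] using
    krausMap_ketRight (E := E) (1 : Matrix Q Q ℂ)

end KetRight

/-- The partial trace over the second factor, as a linear map. -/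
def ptraceRightLin (Q E : Type*) [Fintype E] : Matrix (Q × E) (Q × E) ℂ →ₗ[ℂ] Matrix Q Q ℂ where
  toFun := ptraceRight
  map_add' M N := by
    ext q q'
    simp [ptraceRight, Finset.sum_add_distrib]
  map_smul' c M := by
    ext q q'
    simp [ptraceRight, Finset.mul_sum]

lemma isCPTP_ptraceRightLin {Q E : Type*} [Fintype Q] [Fintype E] :
    IsCPTP (ptraceRightLin Q E) := by
  classical
  have hkraus : ptraceRightLin Q E = krausMap fun e => (ketRight Q e)ᴴ :=
    LinearMap.ext fun M => (krausMap_conjTranspose_ketRight M).symm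
  rw [hkraus]
  refine isCPTP_krausMap ?_
  simp only [conjTranspose_conjTranspose, sum_ketRight_mul_conjTranspose]

section Recovery

variable {R Q E : Type*} [Fintype R] [DecidableEq R] [Fintype Q] [DecidableEq Q] [Fintype E]
  [DecidableEq E]

/-- The operator `σ^{1/2} (σ_Q^{-1/2} ⊗ 1)` of the Petz recovery map
`X ↦ σ^{1/2} (σ_Q^{-1/2} X σ_Q^{-1/2} ⊗ 1) σ^{1/2}` for the partial trace over `E`. The inverse is
taken on the support of `σ_Q`, as `(√0)⁻¹ = 0`. -/
def petzOperator (σ : Matrix (Q × E) (Q × E) ℂ) : Matrix (Q × E) (Q × E) ℂ :=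
  cfc Real.sqrt σ * (cfc (fun x => (√x)⁻¹) (ptraceRight σ) ⊗ₖ (1 : Matrix E E ℂ))

lemma ptraceRight_petzOperator {σ : Matrix (Q × E) (Q × E) ℂ} (hσ : σ.PosSemidef) :
    ptraceRight ((petzOperator σ)ᴴ * petzOperator σ) = 1 - eigenProj (ptraceRight σ) 0 := by
  let T := cfc (fun x => (√x)⁻¹) (ptraceRight σ) ⊗ₖ (1 : Matrix E E ℂ)
  have hstar : (petzOperator σ)ᴴ * petzOperator σ = T * σ * T := by
    calc (petzOperator σ)ᴴ * petzOperator σ = T * (cfc Real.sqrt σ * cfc Real.sqrt σ) * T := by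
          simp only [petzOperator, T, conjTranspose_mul, conjTranspose_kronecker,
            conjTranspose_one, (isHermitian_cfc _ _).eq, Matrix.mul_assoc]
      _ = T * σ * T := by rw [cfc_sqrt_mul_self hσ]
  rw [hstar, ptraceRight_kronecker_one_mul_mul,
    cfc_inv_sqrt_mul_mul_cfc_inv_sqrt (posSemidef_ptraceRight hσ)]

/-- The Petz recovery map of `σ` for the partial trace over `E`; it preserves the trace only on the
support of `σ_Q`. -/
def petzMap (σ : Matrix (Q × E) (Q × E) ℂ) : Matrix Q Q ℂ →ₗ[ℂ] Matrix (Q × E) (Q × E) ℂ :=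
  krausMap fun e : E => petzOperator σ * ketRight Q e

lemma idTensor_petzMap (σ : Matrix (Q × E) (Q × E) ℂ) (X : Matrix (R × Q) (R × Q) ℂ) :
    idTensor R (petzMap σ) X =
      ((1 : Matrix R R ℂ) ⊗ₖ petzOperator σ) * kroneckerOneHom R Q E X *
        ((1 : Matrix R R ℂ) ⊗ₖ petzOperator σ)ᴴ := by
  have hket : idTensor R (krausMap (ketRight (E := E) Q)) X = kroneckerOneHom R Q E X := by
    ext x y
    exact congrFun₂ (krausMap_ketRight _) x.2 y.2
  have hmul (e : E) : (1 : Matrix R R ℂ) ⊗ₖ (petzOperator σ * ketRight Q e) =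
      ((1 : Matrix R R ℂ) ⊗ₖ petzOperator σ) * ((1 : Matrix R R ℂ) ⊗ₖ ketRight Q e) := by
    rw [← mul_kronecker_mul, Matrix.one_mul]
  rw [petzMap, idTensor_krausMap]
  simp only [hmul]
  rw [krausMap_mul_left, ← idTensor_krausMap, hket]

lemma exists_isCPTP_eq_petzMap [Nonempty (Q × E)] {σ : Matrix (Q × E) (Q × E) ℂ}
    (hσ : σ.PosSemidef) :
    ∃ Φ : Matrix Q Q ℂ →ₗ[ℂ] Matrix (Q × E) (Q × E) ℂ, IsCPTP Φ ∧
      ∀ X, (petzMap σ X).trace = X.trace → Φ X = petzMap σ X := by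
  have hsum : ∑ e : E, (petzOperator σ * ketRight Q e)ᴴ * (petzOperator σ * ketRight Q e) =
      1 - eigenProj (ptraceRight σ) 0 := by
    rw [← ptraceRight_petzOperator hσ, ← krausMap_conjTranspose_ketRight, krausMap_apply]
    simp only [conjTranspose_mul, conjTranspose_conjTranspose, Matrix.mul_assoc]
  refine exists_isCPTP_eq_krausMap ?_
  rw [hsum, sub_sub_cancel]
  exact posSemidef_eigenProj _ _

theorem idTensor_petzMap_of_condMutualInfo_eq_zero {ρ : Matrix (R × Q × E) (R × Q × E) ℂ}
    (hρ : ρ.PosSemidef) (hI : condMutualInfo ρ = 0) :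
    idTensor R (petzMap (ptraceLeft ρ)) (ptrace3E ρ) = ρ := by
  have hρ' := posSemidef_ptrace3E hρ
  have hσ := posSemidef_ptraceLeft hρ
  have hσ' := posSemidef_ptraceLeft hρ'
  have hD : relEntropy ρ ((1 : Matrix R R ℂ) ⊗ₖ ptraceLeft ρ) =
      relEntropy (ptrace3E ρ) ((1 : Matrix R R ℂ) ⊗ₖ ptraceLeft (ptrace3E ρ)) := by
    rw [relEntropy_one_kronecker_ptraceLeft hρ, relEntropy_one_kronecker_ptraceLeft hρ']
    rw [condMutualInfo] at hI
    linarith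
  have hσι : IsRestriction (kroneckerOneHom R Q E) ((1 : Matrix R R ℂ) ⊗ₖ ptraceLeft ρ)
      ((1 : Matrix R R ℂ) ⊗ₖ ptraceLeft (ptrace3E ρ)) := by
    rw [← ptraceRight_ptraceLeft, ← ptrace3E_one_kronecker]
    exact isRestriction_ptrace3E _
  have hsqrt := hσι.cfc_sqrt_mul_map_eq_cfc_sqrt (isRestriction_ptrace3E ρ)
    (PosSemidef.one.kronecker hσ) hρ (PosSemidef.one.kronecker hσ') hρ'
    (suppLE_one_kronecker_ptraceLeft hρ) hD
  have hpetz : ((1 : Matrix R R ℂ) ⊗ₖ petzOperator (ptraceLeft ρ)) *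
      kroneckerOneHom R Q E (cfc Real.sqrt (ptrace3E ρ)) = cfc Real.sqrt ρ := by
    rw [← hsqrt, cfc_one_kronecker hσ.isHermitian, cfc_one_kronecker hσ'.isHermitian, map_mul,
      kroneckerOneHom_one_kronecker, ← Matrix.mul_assoc, ← mul_kronecker_mul, Matrix.one_mul,
      petzOperator, ptraceRight_ptraceLeft]
  calc idTensor R (petzMap (ptraceLeft ρ)) (ptrace3E ρ)
      = cfc Real.sqrt ρ * (cfc Real.sqrt ρ)ᴴ := by
        rw [idTensor_petzMap, ← cfc_sqrt_mul_self hρ', ← hpetz, conjTranspose_mul,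
          ← map_conjTranspose, (isHermitian_cfc _ _).eq, map_mul]
        simp only [Matrix.mul_assoc]
    _ = ρ := by rw [(isHermitian_cfc _ ρ).eq, cfc_sqrt_mul_self hρ]

theorem exists_isCPTP_idTensor_ptrace3E_eq {ρ : Matrix (R × Q × E) (R × Q × E) ℂ}
    (hρ : IsState ρ) (hI : condMutualInfo ρ = 0) :
    ∃ Φ : Matrix Q Q ℂ →ₗ[ℂ] Matrix (Q × E) (Q × E) ℂ, IsCPTP Φ ∧
      idTensor R Φ (ptrace3E ρ) = ρ := by
  have hpetz := idTensor_petzMap_of_condMutualInfo_eq_zero hρ.1 hI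
  have := hρ.nonempty.map Prod.snd
  obtain ⟨Φ, hΦ, hΦeq⟩ := exists_isCPTP_eq_petzMap (posSemidef_ptraceLeft hρ.1)
  refine ⟨Φ, hΦ, ?_⟩
  have hblock (r r' : R) :
      petzMap (ptraceLeft ρ) ((ptrace3E ρ).submatrix (Prod.mk r) (Prod.mk r')) =
        ρ.submatrix (Prod.mk r) (Prod.mk r') := by
    nth_rewrite 3 [← hpetz]
    rfl
  have hΦblock (r r' : R) : Φ ((ptrace3E ρ).submatrix (Prod.mk r) (Prod.mk r')) =
      ρ.submatrix (Prod.mk r) (Prod.mk r') :=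
    (hΦeq _ (by rw [hblock, trace_submatrix_ptrace3E])).trans (hblock r r')
  ext x y
  exact congrFun₂ (hΦblock x.1 y.1) x.2 y.2

end Recovery

section Steering

variable {R Q E : Type*} [Fintype R] [Fintype Q] [DecidableEq Q] [Fintype E] [DecidableEq E]

lemma map_ptraceLeft_kronecker_one_mul {B C : Type*} [Fintype B] [DecidableEq B] [Fintype C]
    [DecidableEq C] (Φ : Matrix B B ℂ →ₗ[ℂ] Matrix C C ℂ) (P : Matrix R R ℂ)
    (M : Matrix (R × B) (R × B) ℂ) :
    Φ (ptraceLeft ((P ⊗ₖ (1 : Matrix B B ℂ)) * M)) =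
      ptraceLeft ((P ⊗ₖ (1 : Matrix C C ℂ)) * idTensor R Φ M) := by
  simp only [ptraceLeft_kronecker_one_mul, map_sum, map_smul]
  rfl

theorem apply_eq_self_of_mem_steered {ρ : Matrix (R × Q × E) (R × Q × E) ℂ}
    {Φ : Matrix (Q × E) (Q × E) ℂ →ₗ[ℂ] Matrix (Q × E) (Q × E) ℂ} (hΦ : idTensor R Φ ρ = ρ)
    {ω : Matrix (Q × E) (Q × E) ℂ} (hω : ω ∈ steered ρ) : Φ ω = ω := by
  obtain ⟨P, -, -, rfl⟩ := hω
  rw [map_smul, map_ptraceLeft_kronecker_one_mul, hΦ]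

end Steering

/-- If `ρ_RQE` is a Markov state (`I(R;E|Q)_ρ = 0`), then for every joint
system-environment isometric evolution there is a single CPTP map describing the reduced
dynamics on all states of the steered family of `ρ_RQE`. -/
theorem stmt5 {R Q E : Type} [Fintype R] [DecidableEq R] [Fintype Q] [DecidableEq Q]
    [Fintype E] [DecidableEq E]
    (ρ : Matrix (R × Q × E) (R × Q × E) ℂ) (hρ : IsState ρ)
    (hMarkov : condMutualInfo ρ = 0) :
    ∀ (Q' E' : Type) [Fintype Q'] [DecidableEq Q'] [Fintype E'] [DecidableEq E']
      (V : Matrix (Q' × E') (Q × E) ℂ), Vᴴ * V = 1 →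
      ∃ ℰ : Matrix Q Q ℂ →ₗ[ℂ] Matrix Q' Q' ℂ, IsCPTP ℰ ∧
        ∀ ω ∈ steered ρ, ptraceRight (V * ω * Vᴴ) = ℰ (ptraceRight ω) := by
  intro Q' E' _ _ _ _ V hV
  obtain ⟨Φ, hΦ, hΦρ⟩ := exists_isCPTP_idTensor_ptrace3E_eq hρ hMarkov
  have hVkraus : IsCPTP (krausMap fun _ : Unit => V) := isCPTP_krausMap (by simpa using hV)
  refine ⟨ptraceRightLin Q' E' ∘ₗ krausMap (fun _ : Unit => V) ∘ₗ Φ,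
    isCPTP_ptraceRightLin.comp (hVkraus.comp hΦ), fun ω hω => ?_⟩
  have hω' : Φ (ptraceRight ω) = ω :=
    apply_eq_self_of_mem_steered (Φ := Φ ∘ₗ ptraceRightLin Q E) hΦρ hω
  simp [ptraceRightLin, krausMap_apply, hω']
end
end

section
/- Let 𝒮 be a post-selected family of states on H_Q⊗H_E, realized by a nonzero completely positive linear map 𝒫 : L(H_{Q0}⊗H_{E0}) → L(H_Q⊗H_E). Let H_R ≅ H_{Q0}⊗H_{E0}, let |Φ⁺⟩ ∈ H_R⊗(H_{Q0}⊗H_{E0}) be a maximally entangled state, and set ρ_RQE := k (id_R⊗𝒫)(|Φ⁺⟩⟨Φ⁺|), where k > 0 is the normalization constant making ρ_RQE a state. Then the steered family of ρ_RQE equals 𝒮, i.e., 𝒮_QE(ρ_RQE) = 𝒮. -/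
open Matrix Kronecker ComplexOrder

noncomputable section

/-
Vectorization identifies vectors of `R ⊗ A` with matrices `N : A × R`, and
`(P ⊗ 1) vec N = vec (N Pᵀ)`. Operators on the reference commute with `id ⊗ Φ`, and tracing out
the reference of `|vec X⟩⟨vec Y|` leaves `X Yᴴ`; so measuring `P` on the reference of
`(id ⊗ Φ)(|vec N⟩⟨vec N|)` leaves `Φ(N Pᵀ Nᴴ)`. If `N` is right invertible, which is the case when
`vec N` is maximally entangled since `N` is then a multiple of a unitary, `N Pᵀ Nᴴ` runs through
all positive semidefinite operators as `P` does. Normalization to unit trace does not see nonzero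
scalars, so these give the same outputs as the states.
-/

/-- The normalized outputs of a map `Φ` on states: the post-selected family that `Φ` realizes. -/
def postSelectedFamily {A B : Type*} [Fintype A] [Fintype B]
    (Φ : Matrix A A ℂ →ₗ[ℂ] Matrix B B ℂ) : Set (Matrix B B ℂ) :=
  { ω | ∃ ρ, IsState ρ ∧ (Φ ρ).trace ≠ 0 ∧ ω = ((Φ ρ).trace)⁻¹ • Φ ρ }

/-- The vector `(1/√d) ∑ i, e i ⊗ f i`, where `d` is the number of indices. It is maximally
entangled when the families `e` and `f` are orthonormal. -/
def maximallyEntangled {n : Type*} [Fintype n] (e f : n → n → ℂ) : n × n → ℂ :=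
  fun x => ((√(Fintype.card n) : ℝ) : ℂ)⁻¹ * ∑ i, e i x.1 * f i x.2

section Normalization

variable {n A B : Type*} [Fintype n] [Fintype A] [Fintype B]

lemma inv_trace_smul_smul {𝕜 : Type*} [Field 𝕜] {c : 𝕜} (hc : c ≠ 0) (M : Matrix n n 𝕜) :
    ((c • M).trace)⁻¹ • (c • M) = M.trace⁻¹ • M := by
  rw [trace_smul, smul_eq_mul, smul_smul, mul_inv, mul_right_comm, inv_mul_cancel₀ hc, one_mul]

lemma isState_inv_trace_smul {X : Matrix n n ℂ} (hX : X.PosSemidef) (htr : X.trace ≠ 0) :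
    IsState (X.trace⁻¹ • X) :=
  ⟨hX.smul (inv_nonneg.mpr hX.trace_nonneg), by
    rw [trace_smul, smul_eq_mul, inv_mul_cancel₀ htr]⟩

lemma mem_postSelectedFamily_iff_posSemidef {Φ : Matrix A A ℂ →ₗ[ℂ] Matrix B B ℂ}
    {ω : Matrix B B ℂ} :
    ω ∈ postSelectedFamily Φ ↔
      ∃ X : Matrix A A ℂ, X.PosSemidef ∧ (Φ X).trace ≠ 0 ∧ ω = ((Φ X).trace)⁻¹ • Φ X := by
  constructor
  · rintro ⟨ρ, hρ, htr, hω⟩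
    exact ⟨ρ, hρ.1, htr, hω⟩
  · rintro ⟨X, hX, htr, rfl⟩
    have hX0 : X.trace ≠ 0 := fun h => htr <| by
      rw [hX.trace_eq_zero_iff.mp h, map_zero, trace_zero]
    refine ⟨X.trace⁻¹ • X, isState_inv_trace_smul hX hX0, ?_, ?_⟩
    · rw [map_smul, trace_smul]
      exact smul_ne_zero (inv_ne_zero hX0) htr
    · rw [map_smul, inv_trace_smul_smul (inv_ne_zero hX0)]

end Normalization

section Steering

variable {R A B Q E : Type*} [Fintype R]

lemma ptraceLeft_smul (c : ℂ) (M : Matrix (R × B) (R × B) ℂ) :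
    ptraceLeft (c • M) = c • ptraceLeft M := by
  ext x y
  simp only [ptraceLeft, of_apply, Matrix.smul_apply, Finset.smul_sum]

lemma ptraceLeft_idTensor (Φ : Matrix A A ℂ →ₗ[ℂ] Matrix B B ℂ)
    (M : Matrix (R × A) (R × A) ℂ) :
    ptraceLeft (idTensor R Φ M) = Φ (ptraceLeft M) := by
  have hM : ptraceLeft M = ∑ r, Matrix.of fun a b => M (r, a) (r, b) := by
    ext a b
    simp only [ptraceLeft, Matrix.sum_apply, of_apply]
  rw [hM, map_sum]
  ext x y
  simp only [ptraceLeft, idTensor, of_apply, Matrix.sum_apply]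

lemma ptraceLeft_vecMulVec_vec (X Y : Matrix A R ℂ) :
    ptraceLeft (vecMulVec (vec X) (star (vec Y))) = X * Yᴴ := rfl

lemma kronecker_one_mul_apply {α n : Type*} [NonAssocSemiring α] [Fintype B] [DecidableEq B]
    (P : Matrix R R α) (M : Matrix (R × B) n α) (x : R × B) (y : n) :
    ((P ⊗ₖ (1 : Matrix B B α)) * M) x y = ∑ r, P x.1 r * M (r, x.2) y := by
  simp only [mul_apply, kroneckerMap_apply, Fintype.sum_prod_type, one_apply, mul_ite, mul_one,
    mul_zero, ite_mul, zero_mul, Finset.sum_ite_eq, Finset.mem_univ, if_true]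

lemma kronecker_one_mul_idTensor [Fintype A] [DecidableEq A] [Fintype B] [DecidableEq B]
    (Φ : Matrix A A ℂ →ₗ[ℂ] Matrix B B ℂ) (P : Matrix R R ℂ) (M : Matrix (R × A) (R × A) ℂ) :
    (P ⊗ₖ (1 : Matrix B B ℂ)) * idTensor R Φ M =
      idTensor R Φ ((P ⊗ₖ (1 : Matrix A A ℂ)) * M) := by
  ext x y
  have hblock : (Matrix.of fun a b => ∑ r, P x.1 r * M (r, a) (y.1, b)) =
      ∑ r, P x.1 r • Matrix.of fun a b => M (r, a) (y.1, b) := by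
    ext a b
    simp only [of_apply, Matrix.sum_apply, Matrix.smul_apply, smul_eq_mul]
  simp only [kronecker_one_mul_apply, idTensor, of_apply, hblock, map_sum, map_smul,
    Matrix.sum_apply, Matrix.smul_apply, smul_eq_mul]

lemma kronecker_one_mulVec_vec {α : Type*} [CommSemiring α] [Fintype A] [DecidableEq A]
    (P : Matrix R R α) (N : Matrix A R α) :
    (P ⊗ₖ (1 : Matrix A A α)) *ᵥ vec N = vec (N * Pᵀ) := by
  rw [kronecker_mulVec_vec, Matrix.one_mul]

lemma ptraceLeft_kronecker_one_mul_idTensor_vec [Finite A] [Fintype B] [DecidableEq B]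
    (Φ : Matrix A A ℂ →ₗ[ℂ] Matrix B B ℂ) (P : Matrix R R ℂ)
    (N : Matrix A R ℂ) :
    ptraceLeft ((P ⊗ₖ (1 : Matrix B B ℂ)) * idTensor R Φ (vecMulVec (vec N) (star (vec N)))) =
      Φ (N * Pᵀ * Nᴴ) := by
  classical
  cases nonempty_fintype A
  rw [kronecker_one_mul_idTensor, mul_vecMulVec, kronecker_one_mulVec_vec, ptraceLeft_idTensor,
    ptraceLeft_vecMulVec_vec]

lemma steered_smul [Fintype Q] [DecidableEq Q] [Fintype E] [DecidableEq E] {c : ℂ} (hc : c ≠ 0)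
    (ρ : Matrix (R × Q × E) (R × Q × E) ℂ) : steered (c • ρ) = steered ρ := by
  have htr (M : Matrix (Q × E) (Q × E) ℂ) : (c • M).trace ≠ 0 ↔ M.trace ≠ 0 := by
    rw [trace_smul, smul_ne_zero_iff_right hc]
  simp only [steered, mul_smul_comm, ptraceLeft_smul, inv_trace_smul_smul hc, htr]

lemma posSemidef_iff_exists_mul_transpose_mul_conjTranspose {𝕜 : Type*} [RCLike 𝕜] [Finite A]
    [DecidableEq A] {N : Matrix A R 𝕜} {M : Matrix R A 𝕜} (hNM : N * M = 1) {X : Matrix A A 𝕜} :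
    X.PosSemidef ↔ ∃ P : Matrix R R 𝕜, P.PosSemidef ∧ N * Pᵀ * Nᴴ = X := by
  cases nonempty_fintype A
  constructor
  · intro hX
    refine ⟨(M * X * Mᴴ)ᵀ, (hX.mul_mul_conjTranspose_same M).transpose, ?_⟩
    calc N * (M * X * Mᴴ)ᵀᵀ * Nᴴ = (N * M) * X * (N * M)ᴴ := by
          simp only [transpose_transpose, conjTranspose_mul, Matrix.mul_assoc]
      _ = X := by rw [hNM, conjTranspose_one, Matrix.one_mul, Matrix.mul_one]
  · rintro ⟨P, hP, rfl⟩
    exact hP.transpose.mul_mul_conjTranspose_same N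

/-- Right invertibility of `N` says that `vec N` has full Schmidt rank on the input system `A`. -/
theorem stmt16_general [Fintype A] [DecidableEq A] [Fintype Q] [DecidableEq Q] [Fintype E]
    [DecidableEq E] (Φ : Matrix A A ℂ →ₗ[ℂ] Matrix (Q × E) (Q × E) ℂ) {N : Matrix A R ℂ}
    {M : Matrix R A ℂ} (hNM : N * M = 1) {c : ℂ} (hc : c ≠ 0) :
    steered (c • idTensor R Φ (vecMulVec (vec N) (star (vec N)))) = postSelectedFamily Φ := by
  rw [steered_smul hc]
  ext ω
  rw [mem_postSelectedFamily_iff_posSemidef]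
  simp only [steered, ptraceLeft_kronecker_one_mul_idTensor_vec, Set.mem_ofPred_eq,
    posSemidef_iff_exists_mul_transpose_mul_conjTranspose hNM]
  constructor
  · rintro ⟨P, hP, htr, hω⟩
    exact ⟨_, ⟨P, hP, rfl⟩, htr, hω⟩
  · rintro ⟨_, ⟨P, hP, rfl⟩, htr, hω⟩
    exact ⟨P, hP, htr, hω⟩

end Steering

section MaximallyEntangled

variable {n : Type*} [Fintype n]

lemma maximallyEntangled_eq_vec (e f : n → n → ℂ) :
    maximallyEntangled e f =
      vec (((√(Fintype.card n) : ℝ) : ℂ)⁻¹ • ((Matrix.of f)ᵀ * Matrix.of e)) := by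
  ext x
  simp only [maximallyEntangled, vec, Matrix.smul_apply, mul_apply, transpose_apply, of_apply,
    smul_eq_mul, mul_comm]

lemma of_mem_unitaryGroup_of_orthonormal {α : Type*} [CommRing α] [StarRing α] [DecidableEq n]
    {e : n → n → α} (he : ∀ i j, star (e i) ⬝ᵥ e j = if i = j then 1 else 0) :
    Matrix.of e ∈ unitaryGroup n α := by
  rw [mem_unitaryGroup_iff]
  ext i j
  calc (Matrix.of e * star (Matrix.of e)) i j = star (e j) ⬝ᵥ e i := dotProduct_comm _ _
    _ = (1 : Matrix n n α) i j := by simp only [he, one_apply, eq_comm]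

lemma exists_maximallyEntangled_eq_vec_and_mul_eq_one [DecidableEq n] {e f : n → n → ℂ}
    (he : ∀ i j, star (e i) ⬝ᵥ e j = if i = j then 1 else 0)
    (hf : ∀ i j, star (f i) ⬝ᵥ f j = if i = j then 1 else 0) :
    ∃ N M : Matrix n n ℂ, maximallyEntangled e f = vec N ∧ N * M = 1 := by
  have hU : (Matrix.of f)ᵀ * Matrix.of e ∈ unitaryGroup n ℂ :=
    mul_mem (transpose_mem_unitaryGroup_iff.mpr (of_mem_unitaryGroup_of_orthonormal hf))
      (of_mem_unitaryGroup_of_orthonormal he)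
  refine ⟨_, ((√(Fintype.card n) : ℝ) : ℂ) • star ((Matrix.of f)ᵀ * Matrix.of e),
    maximallyEntangled_eq_vec e f, ?_⟩
  rcases isEmpty_or_nonempty n with _ | _
  · exact Subsingleton.elim _ _
  · have hd : ((√(Fintype.card n) : ℝ) : ℂ) ≠ 0 := by
      simp only [ne_eq, Complex.ofReal_eq_zero, Real.sqrt_ne_zero', Nat.cast_pos, Fintype.card_pos]
    rw [smul_mul_smul_comm, inv_mul_cancel₀ hd, one_smul, mem_unitaryGroup_iff.mp hU]

end MaximallyEntangled

/-- Let `S` be a post-selected family realized by a nonzero completely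
positive map `Pm : Q₀E₀ → QE`, let `|Φ⁺⟩` be a maximally entangled state of
`R ⊗ (Q₀ ⊗ E₀)` with `R ≅ Q₀ ⊗ E₀`, and let `ρ_RQE = k (id_R ⊗ Pm)(|Φ⁺⟩⟨Φ⁺|)` be the
corresponding normalized state. Then the steered family of `ρ_RQE` equals `S`. -/
theorem stmt16 {Q0 E0 Q E : Type} [Fintype Q0] [DecidableEq Q0] [Fintype E0] [DecidableEq E0]
    [Fintype Q] [DecidableEq Q] [Fintype E] [DecidableEq E]
    (Pm : Matrix (Q0 × E0) (Q0 × E0) ℂ →ₗ[ℂ] Matrix (Q × E) (Q × E) ℂ)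
    (hPm : IsCPMap Pm) (hPmne : Pm ≠ 0)
    (S : Set (Matrix (Q × E) (Q × E) ℂ))
    (hS : S = { ω | ∃ ρ0, IsState ρ0 ∧ (Pm ρ0).trace ≠ 0 ∧ ω = ((Pm ρ0).trace)⁻¹ • Pm ρ0 })
    (e f : (Q0 × E0) → (Q0 × E0) → ℂ)
    (he : ∀ i j, star (e i) ⬝ᵥ e j = if i = j then 1 else 0)
    (hf : ∀ i j, star (f i) ⬝ᵥ f j = if i = j then 1 else 0)
    (Φ : (Q0 × E0) × (Q0 × E0) → ℂ)
    (hΦ : Φ = fun x =>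
      (((Real.sqrt (Fintype.card (Q0 × E0)) : ℝ) : ℂ))⁻¹ * ∑ i, e i x.1 * f i x.2)
    (k : ℝ) (hk : 0 < k)
    (hnorm : (((k : ℂ)) • idTensor (Q0 × E0) Pm (vecMulVec Φ (star Φ))).trace = 1) :
    steered (((k : ℂ)) • idTensor (Q0 × E0) Pm (vecMulVec Φ (star Φ))) = S := by
  obtain ⟨N, M, hN, hNM⟩ := exists_maximallyEntangled_eq_vec_and_mul_eq_one he hf
  rw [hS, hΦ.trans hN]
  exact stmt16_general Pm hNM (Complex.ofReal_ne_zero.mpr hk.ne')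
end
end
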